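/- arXiv:2507.01138 — 3 statements merged into one kernel-verified Lean document; each statement's English description precedes it below -/
import Mathlib

section
/- Let k, D, m ≥ 2 be integers and let F = {f₁,…,f_m} ⊂ ℤ^k with |f_t|₁ < 3D for all t. Then there exists a subset S ⊆ F such that Span_ℤ(S) = Span_ℤ(F), every s ∈ S has |s|₁ < 3D, and |S| ≤ k(2 + log₂ D). -/
theorem det_bound {k : ℕ} (v : Fin k → Fin k → ℤ) (C : ℤ)
    (hv : ∀ i, ∑ j, |v i j| ≤ C) : |(Matrix.of v).det| ≤ C ^ k := by
  have h1 : |(Matrix.of v).det| ≤ ∏ i, ∑ j, |v i j| := by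
    rw [← Matrix.det_transpose, Matrix.det_apply, Finset.prod_univ_sum]
    refine (Finset.abs_sum_le_sum_abs _ _).trans ?_
    have h2 : ∀ σ : Equiv.Perm (Fin k),
        |Equiv.Perm.sign σ • ∏ i, (Matrix.of v).transpose (σ i) i| = ∏ i, |v i (σ i)| := by
      intro σ
      rw [← Finset.abs_prod]
      rcases Int.units_eq_one_or (Equiv.Perm.sign σ) with h | h <;> simp [h]
    rw [Finset.sum_congr rfl (fun σ _ => h2 σ)]
    have h3 : ∑ σ : Equiv.Perm (Fin k), ∏ i, |v i (σ i)|
        = ∑ p ∈ (Finset.univ : Finset (Equiv.Perm (Fin k))).map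
            (⟨fun σ => ⇑σ, DFunLike.coe_injective⟩ : Equiv.Perm (Fin k) ↪ (Fin k → Fin k)), ∏ i, |v i (p i)| := by
      rw [Finset.sum_map]; rfl
    rw [h3]
    apply Finset.sum_le_sum_of_subset_of_nonneg
    · intro p _
      simp
    · intro p _ _
      exact Finset.prod_nonneg fun i _ => abs_nonneg _
  refine h1.trans ?_
  calc ∏ i, ∑ j, |v i j| ≤ ∏ _i : Fin k, C :=
        Finset.prod_le_prod (fun i _ => Finset.sum_nonneg fun j _ => abs_nonneg _) (fun i _ => hv i)
    _ = C ^ k := by simp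

theorem index_bound {k : ℕ} (v : Fin k → Fin k → ℤ) (C : ℕ)
    (hv : ∀ i, ∑ j, |v i j| ≤ (C : ℤ)) (hli : LinearIndependent ℤ v) :
    (Submodule.span ℤ (Set.range v)).toAddSubgroup.index ≠ 0 ∧
    (Submodule.span ℤ (Set.range v)).toAddSubgroup.index ≤ C ^ k := by
  have b := Module.Basis.span hli
  constructor
  · rw [Int.submodule_toAddSubgroup_index_ne_zero_iff]
    exact ⟨b.equivFun⟩
  · have h := Submodule.natAbs_det_basis_change (Pi.basisFun ℤ (Fin k)) _ (Module.Basis.span hli)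
    have h' : (Submodule.span ℤ (Set.range v)).toAddSubgroup.index =
      Nat.card ((Fin k → ℤ) ⧸ Submodule.span ℤ (Set.range v)) := rfl
    rw [h', ← h]
    have h2 : (Subtype.val ∘ (Module.Basis.span hli)) = v := by
      ext i : 1
      simp [Module.Basis.span_apply]
    rw [h2, Pi.basisFun_det]
    have := det_bound v C hv
    rw [← Int.natCast_natAbs] at this
    have h3 : Matrix.detRowAlternating v = (Matrix.of v).det := rfl
    rw [h3]
    exact_mod_cast this

theorem greedy {A : Type*} [AddCommGroup A] [DecidableEq A] (H P : AddSubgroup A) (c : ℕ)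
    (hc : ∀ d, d ∣ H.relIndex P → d ≠ 1 → c ≤ d) (hHP : H ≤ P) (F : Finset A)
    (hF : (F : Set A) ⊆ P) :
    ∃ T ⊆ F, H ⊔ AddSubgroup.closure (T : Set A) = H ⊔ AddSubgroup.closure (F : Set A) ∧
      c ^ T.card ≤ H.relIndex (H ⊔ AddSubgroup.closure (F : Set A)) := by
  induction F using Finset.induction_on with
  | empty => exact ⟨∅, by simp⟩
  | insert f F' hf ih =>
    obtain ⟨T, hT, hTe, hcT⟩ := ih (fun x hx => hF (by simp [Finset.mem_coe.1 hx]))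
    have hins : ∀ X : Finset A, H ⊔ AddSubgroup.closure ((insert f X : Finset A) : Set A)
        = (H ⊔ AddSubgroup.closure (X : Set A)) ⊔ AddSubgroup.closure {f} := by
      intro X
      rw [Finset.coe_insert, Set.insert_eq, AddSubgroup.closure_union, sup_comm (AddSubgroup.closure {f}), sup_assoc]
    by_cases hm : f ∈ H ⊔ AddSubgroup.closure (F' : Set A)
    · have e : H ⊔ AddSubgroup.closure ((insert f F' : Finset A) : Set A)
        = H ⊔ AddSubgroup.closure (F' : Set A) := by
        rw [hins, sup_eq_left, AddSubgroup.closure_le]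
        simpa using hm
      exact ⟨T, hT.trans (Finset.subset_insert _ _), by rw [e, hTe], by rw [e]; exact hcT⟩
    · refine ⟨insert f T, Finset.insert_subset_insert _ hT, by rw [hins, hins, hTe], ?_⟩
      rw [Finset.card_insert_of_notMem (fun h => hf (hT h)), pow_succ]
      have hle : H ⊔ AddSubgroup.closure (F' : Set A)
        ≤ H ⊔ AddSubgroup.closure ((insert f F' : Finset A) : Set A) := by
        rw [hins]; exact le_sup_left
      rw [← AddSubgroup.relIndex_mul_relIndex H _ _ le_sup_left hle]
      refine Nat.mul_le_mul hcT (hc _ ?_ ?_)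
      · have hle2 : H ⊔ AddSubgroup.closure ((insert f F' : Finset A) : Set A) ≤ P :=
          sup_le hHP ((AddSubgroup.closure_le _).2 hF)
        rw [← AddSubgroup.relIndex_mul_relIndex H _ _ le_sup_left (hle.trans hle2),
          ← AddSubgroup.relIndex_mul_relIndex _ _ _ hle hle2]
        exact (Dvd.intro _ rfl).mul_left _
      · rw [Ne, AddSubgroup.relIndex_eq_one]
        intro h
        apply hm
        apply h
        rw [hins]
        exact AddSubgroup.mem_sup_right (AddSubgroup.subset_closure rfl)

theorem odd_index {A : Type*} [AddCommGroup A] (X P : AddSubgroup A) (h0 : X.relIndex P ≠ 0)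
    (h : P ≤ X ⊔ P.map (nsmulAddMonoidHom 2)) : ¬ 2 ∣ X.relIndex P := by
  intro hdvd
  have hfin : Finite (P ⧸ X.addSubgroupOf P) := by
    apply Nat.finite_of_card_ne_zero
    exact h0
  have := Fintype.ofFinite (P ⧸ X.addSubgroupOf P)
  have hd : 2 ∣ Fintype.card (P ⧸ X.addSubgroupOf P) := by
    rw [← Nat.card_eq_fintype_card]; exact hdvd
  obtain ⟨x, hx⟩ := exists_prime_addOrderOf_dvd_card 2 hd
  have hsurj : Function.Surjective (fun y : P ⧸ X.addSubgroupOf P => 2 • y) := by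
    intro y
    obtain ⟨p, rfl⟩ := QuotientAddGroup.mk_surjective y
    obtain ⟨a, ha, b, hb, hab⟩ := AddSubgroup.mem_sup.1 (h p.2)
    obtain ⟨q, hq, rfl⟩ := hb
    refine ⟨QuotientAddGroup.mk ⟨q, hq⟩, ?_⟩
    show ((2 • (⟨q, hq⟩ : P) : P) : P ⧸ X.addSubgroupOf P) = _
    rw [QuotientAddGroup.eq, AddSubgroup.mem_addSubgroupOf]
    have : ((-(2 • (⟨q, hq⟩ : P)) + p : P) : A) = a := by
      simp [← hab]
    rw [this]; exact ha
  have hinj := Finite.injective_iff_surjective.2 hsurj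
  have : x = 0 := hinj (by simp only [smul_zero]; rw [← hx]; exact addOrderOf_nsmul_eq_zero x)
  rw [this] at hx
  simp at hx

theorem two_index {k : ℕ} (P : AddSubgroup (Fin k → ℤ)) (h0 : P.index ≠ 0) :
    (P.map (nsmulAddMonoidHom 2)).relIndex P ≠ 0 ∧
    (P.map (nsmulAddMonoidHom 2)).relIndex P ≤ 2 ^ k := by
  have hinj : Function.Injective (nsmulAddMonoidHom 2 : (Fin k → ℤ) →+ (Fin k → ℤ)) := by
    intro x y h
    ext i
    have := congrFun h i
    simp at this
    exact this
  set D : AddSubgroup (Fin k → ℤ) := (⊤ : AddSubgroup (Fin k → ℤ)).map (nsmulAddMonoidHom 2) with hD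
  have hDi : D.index ≠ 0 ∧ D.index ≤ 2 ^ k := by
    have hb := (Pi.basisFun ℤ (Fin k)).linearIndependent
    have hli : LinearIndependent ℤ (fun i : Fin k => (2:ℤ) • (Pi.basisFun ℤ (Fin k)) i) := by
      rw [linearIndependent_iff'] at hb ⊢
      intro s g hg i hi
      have := hb s (fun i => g i * 2) (by simpa only [smul_smul] using hg) i hi
      simp at this; exact this
    have := index_bound _ 2 (fun i => by
      simp [Pi.single_apply, Finset.sum_ite_eq, abs_mul, apply_ite abs]) hli
    have hle : (Submodule.span ℤ (Set.range
      (fun i : Fin k => (2:ℤ) • (Pi.basisFun ℤ (Fin k)) i))).toAddSubgroup ≤ D := by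
      intro x hx
      have : Submodule.span ℤ (Set.range
        (fun i : Fin k => (2:ℤ) • (Pi.basisFun ℤ (Fin k)) i)) ≤ AddSubgroup.toIntSubmodule D := by
        rw [Submodule.span_le]
        rintro _ ⟨i, rfl⟩
        exact ⟨Pi.basisFun ℤ (Fin k) i, trivial, by ext; simp⟩
      exact this hx
    have hd := AddSubgroup.index_dvd_of_le hle
    refine ⟨fun h => this.1 (by rw [h] at hd; exact Nat.eq_zero_of_zero_dvd hd), ?_⟩
    exact (Nat.le_of_dvd (Nat.pos_of_ne_zero this.1) hd).trans this.2
  have hPP : P.map (nsmulAddMonoidHom 2) ≤ P := by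
    rintro _ ⟨x, hx, rfl⟩
    exact P.nsmul_mem hx 2
  have e1 := AddSubgroup.relIndex_mul_index hPP
  have e2 := AddSubgroup.relIndex_mul_index
    (AddSubgroup.map_mono le_top : P.map (nsmulAddMonoidHom 2) ≤ D)
  rw [AddSubgroup.relIndex_map_map_of_injective _ _ hinj, AddSubgroup.relIndex_top_right] at e2
  rw [← e2, mul_comm] at e1
  have := Nat.eq_of_mul_eq_mul_left (Nat.pos_of_ne_zero h0) e1
  rw [this]; exact hDi

theorem numeric (k D a b n : ℕ) (hD : 2 ≤ D) (hn : n ≤ k + a + b) (ha : a ≤ k)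
    (h : 2 ^ a * 3 ^ b ≤ (3 * D) ^ k) : (n : ℝ) ≤ k * (2 + Real.logb 2 D) := by
  have hD' : (2:ℝ) ≤ D := by exact_mod_cast hD
  have h1 : (2:ℝ) ^ a * 3 ^ b ≤ (3 * D) ^ k := by exact_mod_cast h
  have h2 := Real.log_le_log (by positivity) h1
  rw [Real.log_mul (by positivity) (by positivity), Real.log_pow, Real.log_pow, Real.log_pow,
    Real.log_mul (by positivity) (by positivity)] at h2
  have l2 : 0 < Real.log 2 := Real.log_pos (by norm_num)
  have l23 : Real.log 2 < Real.log 3 := Real.log_lt_log (by norm_num) (by norm_num)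
  have lD : Real.log 2 ≤ Real.log D := Real.log_le_log (by norm_num) hD'
  set x := Real.logb 2 D with hx
  have hxD : Real.log D = x * Real.log 2 := by
    rw [hx, Real.logb]; field_simp
  have hx1 : 1 ≤ x := by
    rw [hxD] at lD; nlinarith
  rw [hxD] at h2
  have hn' : (n:ℝ) ≤ k + a + b := by exact_mod_cast hn
  have ha' : (a:ℝ) ≤ k := by exact_mod_cast ha
  have key : ((a:ℝ) + b) * Real.log 3 ≤ (k * (1 + x)) * Real.log 3 := by
    have p1 : (0:ℝ) ≤ (k - a) * (Real.log 3 - Real.log 2) :=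
      mul_nonneg (by linarith) (by linarith)
    have p2 : (0:ℝ) ≤ k * ((x - 1) * (Real.log 3 - Real.log 2)) :=
      mul_nonneg (by positivity) (mul_nonneg (by linarith) (by linarith))
    nlinarith
  have := le_of_mul_le_mul_right key (by linarith)
  linarith

theorem basis_ext {k : ℕ} (C : ℕ) (hC : 1 ≤ C) (F : Finset (Fin k → ℤ))
    (hF : ∀ f ∈ F, ∑ i, |f i| ≤ (C : ℤ)) :
    ∃ (S : Finset (Fin k → ℤ)) (E : Submodule ℤ (Fin k → ℤ)), S ⊆ F ∧ S.card ≤ k ∧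
      (∀ x ∈ Submodule.span ℤ (F : Set (Fin k → ℤ)), x ∈ E → x = 0) ∧
      (Submodule.span ℤ (S : Set (Fin k → ℤ)) ⊔ E).toAddSubgroup.index ≠ 0 ∧
      (Submodule.span ℤ (S : Set (Fin k → ℤ)) ⊔ E).toAddSubgroup.index ≤ C ^ k := by
  classical
  let φ : (Fin k → ℤ) →ₗ[ℤ] (Fin k → ℚ) :=
    { toFun := fun f i => (f i : ℚ)
      map_add' := by intro x y; ext; simp
      map_smul' := by intro x y; ext; simp }
  have hφ : Function.Injective φ := by
    intro x y h
    ext i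
    have : ((x i : ℤ) : ℚ) = (y i : ℚ) := congrFun h i
    exact_mod_cast this
  obtain ⟨b, hbF, -, hFb, hbli⟩ := exists_linearIndepOn_extension (K := ℚ) (v := φ)
    (linearIndepOn_empty ℚ φ) (Set.empty_subset (F : Set (Fin k → ℤ)))
  obtain ⟨c, hcU, hbc, hUc, hcli⟩ := exists_linearIndepOn_extension (K := ℚ) (v := φ)
    hbli (hbF.trans (Set.subset_union_left (t := Set.range fun i : Fin k => (Pi.single i 1 : Fin k → ℤ))))
  have hspan : Submodule.span ℚ (φ '' c) = ⊤ := by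
    rw [eq_top_iff, ← (Pi.basisFun ℚ (Fin k)).span_eq, Submodule.span_le]
    rintro _ ⟨i, rfl⟩
    apply hUc
    refine ⟨Pi.single i 1, Or.inr ⟨i, rfl⟩, ?_⟩
    ext j
    simp [φ, Pi.single_apply]
  have B : Module.Basis c ℚ (Fin k → ℚ) := Module.Basis.mk hcli (by
    rw [← Set.image_eq_range, hspan])
  have hcfin : Finite c := Module.Finite.finite_basis B
  have := Fintype.ofFinite c
  have hcard : Fintype.card c = k := by
    have := Module.finrank_eq_card_basis B
    simpa using this.symm
  let e : Fin k ≃ c := (Fintype.equivFinOfCardEq hcard).symm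
  have hv : ∀ i, ∑ j, |(e i : Fin k → ℤ) j| ≤ (C:ℤ) := by
    intro i
    rcases hcU (e i).2 with h | ⟨j, h⟩
    · exact hF _ h
    · rw [← h]
      simp [Pi.single_apply, apply_ite abs]
      exact_mod_cast hC
  have hliZ : LinearIndependent ℤ (fun i => (e i : Fin k → ℤ)) := by
    have h1 : LinearIndependent ℤ (fun i : c => φ i) := hcli.restrict_scalars' ℤ
    have h2 : LinearIndependent ℤ (fun i : c => (i : Fin k → ℤ)) :=
      LinearIndependent.of_comp φ h1
    exact h2.comp e e.injective
  have hr : Set.range (fun i => (e i : Fin k → ℤ)) = c := by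
    have : (fun i => (e i : Fin k → ℤ)) = Subtype.val ∘ e := rfl
    rw [this, e.surjective.range_comp, Subtype.range_coe]
  have hidx := index_bound _ C hv hliZ
  rw [hr] at hidx
  have hbfin : b.Finite := F.finite_toSet.subset hbF
  refine ⟨hbfin.toFinset, Submodule.span ℤ (c \ b), ?_, ?_, ?_, ?_⟩
  · intro x hx; exact hbF (by simpa using hx)
  · rw [← Set.ncard_eq_toFinset_card b hbfin]
    calc b.ncard ≤ c.ncard := Set.ncard_le_ncard hbc (Set.toFinite c)
      _ = k := by rw [← Nat.card_coe_set_eq, Nat.card_eq_fintype_card, hcard]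
  · intro x hxF hxE
    have hdisj : Disjoint (Submodule.span ℚ (φ '' b)) (Submodule.span ℚ (φ '' (c \ b))) := by
      have := hcli
      rw [← Set.union_sdiff_cancel hbc, linearIndepOn_union_iff Set.disjoint_sdiff_right] at this
      exact this.2.2
    have hgen : ∀ (s : Set (Fin k → ℤ)) (W : Submodule ℚ (Fin k → ℚ)), φ '' s ⊆ W →
        ∀ x ∈ Submodule.span ℤ s, φ x ∈ W := by
      intro s W hs x hx
      have : Submodule.span ℤ s ≤ (W.restrictScalars ℤ).comap φ := by
        rw [Submodule.span_le]
        intro y hy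
        exact hs ⟨y, hy, rfl⟩
      exact this hx
    apply hφ
    rw [map_zero]
    exact Submodule.disjoint_def.1 hdisj _ (hgen _ _ hFb x hxF)
      (hgen _ _ Submodule.subset_span x hxE)
  · rw [Set.Finite.coe_toFinset, ← Submodule.span_union, Set.union_sdiff_cancel hbc]
    exact hidx

theorem stmt5 (k D m : ℕ) (hk : 2 ≤ k) (hD : 2 ≤ D) (hm : 2 ≤ m)
    (F : Finset (Fin k → ℤ)) (hcard : F.card = m)
    (hF : ∀ f ∈ F, ∑ i, |f i| < 3 * (D : ℤ)) :
    ∃ S ⊆ F, Submodule.span ℤ (S : Set (Fin k → ℤ)) = Submodule.span ℤ (F : Set (Fin k → ℤ))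
      ∧ (∀ s ∈ S, ∑ i, |s i| < 3 * (D : ℤ))
      ∧ (S.card : ℝ) ≤ k * (2 + Real.logb 2 D) := by
  classical
  obtain ⟨S0, E, hS0F, hS0k, hE, hi0, hi⟩ := basis_ext (3 * D) (by omega) F
    (fun f hf => by push_cast; exact (hF f hf).le)
  set H := (Submodule.span ℤ (S0 : Set (Fin k → ℤ)) ⊔ E).toAddSubgroup with hH
  set P := H ⊔ AddSubgroup.closure (F : Set (Fin k → ℤ)) with hP
  have hHP : H ≤ P := le_sup_left
  have hFP : (F : Set (Fin k → ℤ)) ⊆ P := fun x hx =>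
    (le_sup_right : _ ≤ P) (AddSubgroup.subset_closure hx)
  have hHPi := AddSubgroup.relIndex_mul_index hHP
  have hP0 : P.index ≠ 0 := fun h => hi0 (by rw [← hHPi, h, mul_zero])
  have hHP0 : H.relIndex P ≠ 0 := fun h => hi0 (by rw [← hHPi, h, zero_mul])
  have hHPle : H.relIndex P ≤ (3 * D) ^ k :=
    (Nat.le_of_dvd (Nat.pos_of_ne_zero hi0) (AddSubgroup.relIndex_dvd_index_of_le hHP)).trans hi
  set Q := P.map (nsmulAddMonoidHom 2) with hQ
  obtain ⟨hQ0, hQk⟩ := two_index P hP0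
  have hQP : Q ≤ P := by
    rintro _ ⟨x, hx, rfl⟩
    exact P.nsmul_mem hx 2
  have hHQ0 : (H ⊔ Q).relIndex P ≠ 0 := fun h =>
    hQ0 (AddSubgroup.relIndex_eq_zero_of_le_left le_sup_right h)
  -- first stage: generate modulo doubles
  obtain ⟨T1, hT1F, hT1, hc1⟩ := greedy (H ⊔ Q) P 2 (by
    intro d hd h1
    have : d ≠ 0 := by rintro rfl; exact hHQ0 (Nat.eq_zero_of_zero_dvd hd)
    omega) (sup_le hHP hQP) F hFP
  have hPe : (H ⊔ Q) ⊔ AddSubgroup.closure (F : Set (Fin k → ℤ)) = P := by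
    rw [sup_right_comm, ← hP, sup_eq_left.2 hQP]
  rw [hPe] at hT1 hc1
  set X := H ⊔ AddSubgroup.closure (T1 : Set (Fin k → ℤ)) with hX
  have hXP : X ≤ P := sup_le hHP ((AddSubgroup.closure_le _).2 fun x hx => hFP (hT1F hx))
  have hXQ : X ⊔ Q = P := by rw [hX, sup_right_comm, hT1]
  have hak : T1.card ≤ k := by
    have h1 : 2 ^ T1.card ≤ 2 ^ k := hc1.trans
      ((AddSubgroup.relIndex_le_of_le_left le_sup_right hQ0).trans hQk)
    exact (Nat.pow_le_pow_iff_right (by norm_num)).1 h1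
  have hHX := AddSubgroup.relIndex_mul_relIndex H X P le_sup_left hXP
  have hHX0 : H.relIndex X ≠ 0 := fun h => hHP0 (by rw [← hHX, h, zero_mul])
  have hXP0 : X.relIndex P ≠ 0 := fun h => hHP0 (by rw [← hHX, h, mul_zero])
  have ha : 2 ^ T1.card ≤ H.relIndex X := by
    refine hc1.trans ?_
    have : P = X ⊔ (H ⊔ Q) := by
      rw [← sup_assoc, sup_eq_left.2 (le_sup_left : H ≤ X), hXQ]
    rw [this, AddSubgroup.relIndex_sup_right]
    exact AddSubgroup.relIndex_le_of_le_left le_sup_left hHX0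
  have hodd := odd_index X P hXP0 hXQ.ge
  obtain ⟨T2, hT2F, hT2, hc2⟩ := greedy X P 3 (by
    intro d hd h1
    have : d ≠ 0 := by rintro rfl; exact hXP0 (Nat.eq_zero_of_zero_dvd hd)
    have : d ≠ 2 := by rintro rfl; exact hodd hd
    omega) hXP F hFP
  have hPe2 : X ⊔ AddSubgroup.closure (F : Set (Fin k → ℤ)) = P :=
    le_antisymm (sup_le hXP le_sup_right) (sup_le_sup_right le_sup_left _)
  rw [hPe2] at hT2 hc2
  have hSF : S0 ∪ T1 ∪ T2 ⊆ F := Finset.union_subset (Finset.union_subset hS0F hT1F) hT2F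
  refine ⟨S0 ∪ T1 ∪ T2, hSF, ?_, fun s hs => hF s (hSF hs), ?_⟩
  · apply le_antisymm
    · exact Submodule.span_mono (by exact_mod_cast hSF)
    · intro x hx
      set Y := Submodule.span ℤ ((S0 ∪ T1 ∪ T2 : Finset (Fin k → ℤ)) : Set (Fin k → ℤ)) with hY
      have hYF : Y ≤ Submodule.span ℤ (F : Set (Fin k → ℤ)) :=
        Submodule.span_mono (by exact_mod_cast hSF)
      have hxP : x ∈ P := by
        have : Submodule.span ℤ (F : Set (Fin k → ℤ)) ≤ AddSubgroup.toIntSubmodule P :=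
          Submodule.span_le.2 hFP
        exact this hx
      have hPY : P ≤ (Y ⊔ E).toAddSubgroup := by
        rw [← hT2, hX]
        have hs : ∀ T : Finset (Fin k → ℤ), T ⊆ S0 ∪ T1 ∪ T2 →
            AddSubgroup.closure (T : Set (Fin k → ℤ)) ≤ (Y ⊔ E).toAddSubgroup := by
          intro T hT
          rw [AddSubgroup.closure_le]
          intro y hy
          exact (le_sup_left : Y ≤ Y ⊔ E) (Submodule.subset_span (hT hy))
        refine sup_le (sup_le ?_ (hs _ ?_)) (hs _ ?_)
        · have : Submodule.span ℤ (S0 : Set (Fin k → ℤ)) ⊔ E ≤ Y ⊔ E := by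
            refine sup_le_sup_right (Submodule.span_mono ?_) _
            intro y hy
            simp [Finset.mem_coe.1 hy]
          exact this
        · intro y hy; simp [hy]
        · intro y hy; simp [hy]
      obtain ⟨y, hy, z, hz, hyz⟩ := Submodule.mem_sup.1 (show x ∈ Y ⊔ E from hPY hxP)
      have hz0 : z = 0 := by
        apply hE z _ hz
        have : z = x - y := by rw [← hyz]; abel
        rw [this]
        exact Submodule.sub_mem _ hx (hYF hy)
      rw [← hyz, hz0, add_zero]; exact hy
  · apply numeric k D T1.card T2.card _ hD _ hak
    · refine le_trans ?_ hHPle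
      rw [← hHX]
      exact Nat.mul_le_mul ha hc2
    · have h1 := Finset.card_union_le (S0 ∪ T1) T2
      have h2 := Finset.card_union_le S0 T1
      omega
end

section
/- Let k, D, m ≥ 2 be integers. The number of distinct subgroups of ℤ^k of the form Span_ℤ(f₁,…,f_m) with each f_t ∈ ℤ^k satisfying |f_t|₁ < 3D is at most k^{C·k·D·log₂ D} for some absolute constant C > 0. -/
lemma aux_geom (x : ℝ) (hx0 : 0 ≤ x) (hx1 : x < 1) (R : ℕ) :
    ∑ j ∈ Finset.Icc (-(R : ℤ)) R, x ^ j.natAbs ≤ (1 + x) / (1 - x) := by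
  have key : (∑ j ∈ Finset.Icc (-(R : ℤ)) R, x ^ j.natAbs) * (1 - x)
      = 1 + x - 2 * x ^ (R + 1) := by
    induction R with
    | zero => simp; ring
    | succ n ih =>
      have h : Finset.Icc (-((n + 1 : ℕ) : ℤ)) ((n + 1 : ℕ) : ℤ) =
          insert (-((n + 1 : ℕ) : ℤ)) (insert ((n + 1 : ℕ) : ℤ) (Finset.Icc (-(n : ℤ)) n)) := by
        ext j
        simp only [Finset.mem_Icc, Finset.mem_insert]
        omega
      rw [h, Finset.sum_insert, Finset.sum_insert, Int.natAbs_neg, Int.natAbs_natCast, add_mul,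
        add_mul, ih]
      · ring
      · simp only [Finset.mem_Icc]; omega
      · simp only [Finset.mem_Icc, Finset.mem_insert]; omega
  rw [le_div_iff₀ (by linarith), key]
  have : 0 ≤ x ^ (R + 1) := by positivity
  linarith

lemma aux_count (k R : ℕ) (y : ℝ) (hy : 1 < y) (S : Finset (Fin k → ℤ))
    (hS : ∀ v ∈ S, ∑ i, |v i| ≤ (R : ℤ)) :
    (S.card : ℝ) ≤ y ^ R * ((y + 1) / (y - 1)) ^ k := by
  have hy0 : 0 < y := by linarith
  have hsub : S ⊆ Fintype.piFinset (fun _ : Fin k => Finset.Icc (-(R : ℤ)) R) := by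
    intro v hv
    rw [Fintype.mem_piFinset]
    intro i
    have h1 : |v i| ≤ ∑ i, |v i| :=
      Finset.single_le_sum (f := fun i => |v i|) (fun i _ => abs_nonneg _) (Finset.mem_univ i)
    rw [Finset.mem_Icc]
    exact abs_le.mp (h1.trans (hS v hv))
  have h1 : ∀ v ∈ S, (1 : ℝ) ≤ y ^ R * ∏ i, (y⁻¹) ^ (v i).natAbs := by
    intro v hv
    rw [Finset.prod_pow_eq_pow_sum, inv_pow, ← div_eq_mul_inv, one_le_div (by positivity)]
    apply pow_le_pow_right₀ hy.le
    have := hS v hv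
    zify
    simpa using this
  have hg : ∑ j ∈ Finset.Icc (-(R : ℤ)) R, (y⁻¹) ^ j.natAbs ≤ (y + 1) / (y - 1) := by
    refine (aux_geom y⁻¹ (by positivity) (inv_lt_one_of_one_lt₀ hy) R).trans (le_of_eq ?_)
    have : y - 1 ≠ 0 := by linarith
    have h2 : 1 - y⁻¹ ≠ 0 := by
      have := inv_lt_one_of_one_lt₀ hy
      linarith
    rw [div_eq_div_iff h2 this]
    field_simp
  calc (S.card : ℝ) = ∑ v ∈ S, (1 : ℝ) := by simp
    _ ≤ ∑ v ∈ S, y ^ R * ∏ i, (y⁻¹) ^ (v i).natAbs := Finset.sum_le_sum h1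
    _ ≤ ∑ v ∈ Fintype.piFinset (fun _ : Fin k => Finset.Icc (-(R : ℤ)) R),
          y ^ R * ∏ i, (y⁻¹) ^ (v i).natAbs :=
        Finset.sum_le_sum_of_subset_of_nonneg hsub (fun _ _ _ => by positivity)
    _ = y ^ R * (∑ j ∈ Finset.Icc (-(R : ℤ)) R, (y⁻¹) ^ j.natAbs) ^ k := by
        rw [← Finset.mul_sum, Finset.sum_pow']
    _ ≤ _ := by
        gcongr

lemma aux_min {k : ℕ} (S : Finset (Fin k → ℤ)) : ∃ T ⊆ S,
    Submodule.span ℤ (T : Set (Fin k → ℤ)) = Submodule.span ℤ (S : Set (Fin k → ℤ)) ∧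
    Set.InjOn (fun A : Finset (Fin k → ℤ) => ∑ v ∈ A, v) (T.powerset : Set (Finset (Fin k → ℤ))) := by
  classical
  obtain ⟨T, hT, hmin⟩ := Finset.exists_min_image
    (S.powerset.filter (fun T : Finset (Fin k → ℤ) => Submodule.span ℤ (T : Set (Fin k → ℤ)) =
      Submodule.span ℤ (S : Set (Fin k → ℤ)))) Finset.card ⟨S, by simp⟩
  rw [Finset.mem_filter, Finset.mem_powerset] at hT
  have key : ∀ A B : Finset (Fin k → ℤ), A ⊆ T → B ⊆ T → ∑ v ∈ A, v = ∑ v ∈ B, v → A ⊆ B := by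
    intro A B hA hB h t ht
    by_contra htB
    have htT := hA ht
    have hmem : t ∈ Submodule.span ℤ ((T.erase t : Finset _) : Set (Fin k → ℤ)) := by
      have e : t = ∑ v ∈ B, v - ∑ v ∈ A.erase t, v := by
        rw [← h, ← Finset.add_sum_erase A (fun v => v) ht]
        simp
      suffices hh : ∑ v ∈ B, v - ∑ v ∈ A.erase t, v ∈
          Submodule.span ℤ ((T.erase t : Finset _) : Set (Fin k → ℤ)) by rwa [← e] at hh
      apply Submodule.sub_mem
      · refine Submodule.sum_mem _ fun v hv => Submodule.subset_span ?_
        simp only [Finset.mem_coe, Finset.mem_erase]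
        exact ⟨fun h => htB (h ▸ hv), hB hv⟩
      · refine Submodule.sum_mem _ fun v hv => Submodule.subset_span ?_
        rw [Finset.mem_erase] at hv
        simp only [Finset.mem_coe, Finset.mem_erase]
        exact ⟨hv.1, hA hv.2⟩
    have hs : Submodule.span ℤ ((T.erase t : Finset _) : Set (Fin k → ℤ)) =
        Submodule.span ℤ (T : Set (Fin k → ℤ)) := by
      apply le_antisymm
      · exact Submodule.span_mono (by exact_mod_cast Finset.erase_subset t T)
      · rw [Submodule.span_le]
        intro v hv
        by_cases hvt : v = t
        · rw [hvt]; exact hmem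
        · exact Submodule.subset_span (by simp [hvt]; exact_mod_cast hv)
    have := hmin (T.erase t) (by
      rw [Finset.mem_filter, Finset.mem_powerset]
      exact ⟨(Finset.erase_subset t T).trans hT.1, hs.trans hT.2⟩)
    have h2 := Finset.card_erase_lt_of_mem htT
    omega
  refine ⟨T, hT.1, hT.2, ?_⟩
  intro A hA B hB h
  simp only [Finset.coe_powerset, Set.mem_preimage, Set.mem_powerset_iff, Finset.coe_subset] at hA hB
  exact (key A B hA hB h).antisymm (key B A hB hA h.symm)

lemma aux_card {k D : ℕ} (hk : 2 ≤ k) (hD : 2 ≤ D) (T : Finset (Fin k → ℤ))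
    (hT : ∀ v ∈ T, ∑ i, |v i| ≤ 3 * (D : ℤ))
    (hinj : Set.InjOn (fun A : Finset (Fin k → ℤ) => ∑ v ∈ A, v)
      (T.powerset : Set (Finset (Fin k → ℤ)))) :
    (T.card : ℝ) ≤ 14 * k * Real.logb 2 D := by
  classical
  have hkR : (2 : ℝ) ≤ k := by exact_mod_cast hk
  have hDR : (2 : ℝ) ≤ D := by exact_mod_cast hD
  have hlog : 1 ≤ Real.logb 2 D := by
    rw [Real.le_logb_iff_rpow_le (by norm_num) (by linarith)]
    simpa using hDR
  rcases Nat.eq_zero_or_pos T.card with h0 | hpos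
  · rw [h0]; push_cast; positivity
  have hnR : (0 : ℝ) < T.card := by exact_mod_cast hpos
  set n := T.card with hn
  set a : ℝ := n / k with ha
  have ha0 : 0 < a := by positivity
  set s : ℝ := a * (3 * D) with hs
  have hs0 : 0 < s := by positivity
  have hc := aux_count k (n * (3 * D)) (1 + 1 / s) (by
    have : 0 < 1 / s := by positivity
    linarith) (T.powerset.image (fun A => ∑ v ∈ A, v)) (by
    intro v hv
    rw [Finset.mem_image] at hv
    obtain ⟨A, hA, rfl⟩ := hv
    rw [Finset.mem_powerset] at hA
    calc ∑ i, |(∑ v ∈ A, v) i| ≤ ∑ i, ∑ v ∈ A, |v i| := by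
          apply Finset.sum_le_sum
          intro i _
          rw [Finset.sum_apply]
          exact Finset.abs_sum_le_sum_abs _ _
      _ = ∑ v ∈ A, ∑ i, |v i| := Finset.sum_comm
      _ ≤ ∑ v ∈ A, 3 * (D : ℤ) := Finset.sum_le_sum fun v hv => hT v (hA hv)
      _ = A.card * (3 * (D : ℤ)) := by simp
      _ ≤ ((n * (3 * D) : ℕ) : ℤ) := by
          push_cast
          have := Finset.card_le_card hA
          gcongr)
  rw [Finset.card_image_of_injOn hinj, Finset.card_powerset, ← hn] at hc
  have e1 : (1 + 1 / s + 1) / (1 + 1 / s - 1) = 2 * s + 1 := by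
    field_simp; ring
  have e2 : (1 + 1 / s) ^ (n * (3 * D)) ≤ Real.exp 1 ^ k := by
    calc (1 + 1 / s) ^ (n * (3 * D)) ≤ (Real.exp (1 / s)) ^ (n * (3 * D)) := by
          gcongr
          linarith [Real.add_one_le_exp (1 / s)]
      _ = Real.exp 1 ^ k := by
          rw [← Real.exp_nat_mul, ← Real.exp_nat_mul]
          congr 1
          rw [hs, ha]
          push_cast
          field_simp
  rw [e1] at hc
  have hc2 : (2 : ℝ) ^ n ≤ (Real.exp 1 * (2 * s + 1)) ^ k := by
    rw [mul_pow]
    push_cast at hc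
    refine hc.trans ?_
    gcongr
  have hc3 : (2 : ℝ) ^ a ≤ 3 * (2 * s + 1) := by
    have h1 : ((2 : ℝ) ^ a) ^ k = 2 ^ n := by
      rw [← Real.rpow_natCast, ← Real.rpow_mul (by norm_num), ha, div_mul_cancel₀ _ (by positivity),
        Real.rpow_natCast]
    rw [← h1] at hc2
    have := le_of_pow_le_pow_left₀ (by omega : k ≠ 0) (by positivity) hc2
    refine this.trans ?_
    have := Real.exp_one_lt_d9
    gcongr
    linarith
  set u : ℝ := (2 : ℝ) ^ (a / 2) with hu
  have hu0 : 0 < u := by positivity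
  have huu : u * u = 2 ^ a := by
    rw [hu, ← Real.rpow_add (by norm_num)]; congr 1; ring
  have hua : 1 + a / 3 ≤ u := by
    rw [hu, Real.rpow_def_of_pos (by norm_num)]
    have := Real.add_one_le_exp (Real.log 2 * (a / 2))
    have := Real.log_two_gt_d9
    nlinarith
  have h54 : u ≤ 54 * D := by
    have h : u * u ≤ (54 * D) * u := by
      rw [huu]
      refine hc3.trans ?_
      rw [hs]
      nlinarith
    exact le_of_mul_le_mul_right h hu0
  have hD7 : u ≤ (2 : ℝ) ^ (7 * Real.logb 2 D) := by
    rw [mul_comm, Real.rpow_mul (by norm_num), Real.rpow_logb (by norm_num) (by norm_num) (by linarith)]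
    have h64 : (2 : ℝ) ^ 6 ≤ (D : ℝ) ^ 6 := by gcongr
    have : (D : ℝ) ^ (7 : ℝ) = (D : ℝ) ^ 6 * D := by
      rw [← pow_succ]; exact_mod_cast Real.rpow_natCast (D : ℝ) 7
    rw [this]
    nlinarith
  have := (Real.rpow_le_rpow_left_iff (by norm_num : (1 : ℝ) < 2)).mp hD7
  have hna : (n : ℝ) = a * k := by rw [ha]; field_simp
  rw [hna]
  nlinarith

theorem stmt6 : ∃ C : ℝ, 0 < C ∧ ∀ k D m : ℕ, 2 ≤ k → 2 ≤ D → 2 ≤ m →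
    (Set.ncard {L : Submodule ℤ (Fin k → ℤ) | ∃ f : Fin m → (Fin k → ℤ),
        (∀ t, ∑ i, |f t i| < 3 * (D : ℤ)) ∧ L = Submodule.span ℤ (Set.range f)} : ℝ)
      ≤ (k : ℝ) ^ (C * k * D * Real.logb 2 D) := by
  classical
  refine ⟨84, by norm_num, ?_⟩
  intro k D m hk hD _
  have hkR : (2 : ℝ) ≤ k := by exact_mod_cast hk
  have hDR : (2 : ℝ) ≤ D := by exact_mod_cast hD
  have hlog : 1 ≤ Real.logb 2 D := by
    rw [Real.le_logb_iff_rpow_le (by norm_num) (by linarith)]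
    simpa using hDR
  set V : Finset (Fin k → ℤ) := (Fintype.piFinset
    (fun _ : Fin k => Finset.Icc (-((3 * D : ℕ) : ℤ)) ((3 * D : ℕ) : ℤ))).filter
      (fun v => ∑ i, |v i| ≤ ((3 * D : ℕ) : ℤ)) with hV
  have hmemV : ∀ v : Fin k → ℤ, ∑ i, |v i| ≤ 3 * (D : ℤ) → v ∈ V := by
    intro v hv
    rw [hV, Finset.mem_filter, Fintype.mem_piFinset]
    refine ⟨?_, by push_cast; exact hv⟩
    intro i
    have h1 : |v i| ≤ ∑ i, |v i| :=
      Finset.single_le_sum (f := fun i => |v i|) (fun i _ => abs_nonneg _) (Finset.mem_univ i)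
    rw [Finset.mem_Icc]
    push_cast
    exact abs_le.mp (h1.trans hv)
  have hVcard : (V.card : ℝ) ≤ (k : ℝ) ^ (6 * D) := by
    have h := aux_count k (3 * D) k (by linarith) V (fun v hv => (Finset.mem_filter.mp hv).2)
    refine h.trans ?_
    have h1 : (((k : ℝ) + 1) / (k - 1)) ^ k ≤ (k : ℝ) ^ 6 := by
      have hk1 : (0 : ℝ) < k - 1 := by linarith
      calc (((k : ℝ) + 1) / (k - 1)) ^ k ≤ (Real.exp (2 / (k - 1))) ^ k := by
            gcongr
            refine le_trans (le_of_eq ?_) (Real.add_one_le_exp _)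
            field_simp; ring
        _ = Real.exp (k * (2 / (k - 1))) := by rw [← Real.exp_nat_mul]
        _ ≤ Real.exp ((4 : ℕ) * 1) := by
            apply Real.exp_le_exp.mpr
            rw [← mul_div_assoc, div_le_iff₀ hk1]
            push_cast
            linarith
        _ = Real.exp 1 ^ 4 := by rw [Real.exp_nat_mul]
        _ ≤ (2.8 : ℝ) ^ 4 := by
            have := Real.exp_one_lt_d9
            gcongr
            linarith
        _ ≤ 2 ^ 6 := by norm_num
        _ ≤ (k : ℝ) ^ 6 := by gcongr
    calc (k : ℝ) ^ (3 * D) * (((k : ℝ) + 1) / (k - 1)) ^ k ≤ (k : ℝ) ^ (3 * D) * (k : ℝ) ^ 6 := by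
          gcongr
      _ = (k : ℝ) ^ (3 * D + 6) := by rw [pow_add]
      _ ≤ _ := pow_le_pow_right₀ (by linarith) (by omega)
  set N : ℕ := ⌊14 * (k : ℝ) * Real.logb 2 D⌋₊ with hN
  have hsub : {L : Submodule ℤ (Fin k → ℤ) | ∃ f : Fin m → (Fin k → ℤ),
        (∀ t, ∑ i, |f t i| < 3 * (D : ℤ)) ∧ L = Submodule.span ℤ (Set.range f)} ⊆
      (((Finset.univ : Finset (Fin N → V)).image
        (fun g => Submodule.span ℤ (Set.range (fun i => (g i : Fin k → ℤ))))) :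
        Set (Submodule ℤ (Fin k → ℤ))) := by
    rintro L ⟨f, hf, rfl⟩
    obtain ⟨T, hTS, hspan, hinj⟩ := aux_min (Finset.univ.image f)
    have hT : ∀ v ∈ T, ∑ i, |v i| ≤ 3 * (D : ℤ) := by
      intro v hv
      obtain ⟨t, _, rfl⟩ := Finset.mem_image.mp (hTS hv)
      exact (hf t).le
    have hcard : T.card ≤ N := Nat.le_floor (aux_card hk hD T hT hinj)
    rw [Finset.coe_image, Finset.coe_univ, Set.image_univ] at hspan
    rw [← hspan]
    simp only [Finset.coe_image, Finset.coe_univ, Set.image_univ, Set.mem_range]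
    have h0 : (0 : Fin k → ℤ) ∈ V := hmemV 0 (by simp)
    refine ⟨fun i => if h : (i : ℕ) < T.card then
      ⟨(T.equivFin.symm ⟨i, h⟩ : Fin k → ℤ), hmemV _ (hT _ (T.equivFin.symm ⟨i, h⟩).2)⟩
      else ⟨0, h0⟩, ?_⟩
    apply le_antisymm
    · rw [Submodule.span_le]
      rintro _ ⟨i, rfl⟩
      by_cases h : (i : ℕ) < T.card
      · simp only [h, dite_true]
        exact Submodule.subset_span (T.equivFin.symm ⟨i, h⟩).2
      · simp only [h, dite_false]
        exact Submodule.zero_mem _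
    · apply Submodule.span_mono
      intro v hv
      have hlt := (T.equivFin ⟨v, hv⟩).2
      refine ⟨⟨(T.equivFin ⟨v, hv⟩ : ℕ), by omega⟩, ?_⟩
      simp [hlt]
  have h1 := Set.ncard_le_ncard hsub (Finset.finite_toSet _)
  rw [Set.ncard_coe_finset] at h1
  have h2 := h1.trans Finset.card_image_le
  rw [Finset.card_univ, Fintype.card_fun, Fintype.card_coe, Fintype.card_fin] at h2
  have h3 : ((V.card ^ N : ℕ) : ℝ) ≤ (k : ℝ) ^ (84 * k * D * Real.logb 2 D) := by
    push_cast
    calc (V.card : ℝ) ^ N ≤ ((k : ℝ) ^ (6 * D)) ^ N := by gcongr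
      _ = (k : ℝ) ^ (((6 * D * N : ℕ) : ℝ)) := by rw [Real.rpow_natCast, ← pow_mul]
      _ ≤ _ := by
          apply Real.rpow_le_rpow_of_exponent_le (by linarith)
          have : (N : ℝ) ≤ 14 * (k : ℝ) * Real.logb 2 D := Nat.floor_le (by positivity)
          push_cast
          nlinarith
  exact le_trans (by exact_mod_cast h2) h3
end

section
/- Let G be a graph on n vertices with maximum degree at most d, let d' ≥ 1, and define an auxiliary graph on V(G) where u ∼ u' iff some one of d given maps g_i : V(G) → path P_n sends them to vertices at distance less than ℓ in P_n, where each g_i has all fibers of size at most 4. Then this auxiliary graph has maximum degree less than 8dℓ, and consequently (by Hajnal–Szemerédi) V(G) can be partitioned into 8dℓ independent sets of sizes differing by at most 1, each of which satisfies: for all u ≠ u' in the set and all i, the distance between g_i(u) and g_i(u') in P_n is at least ℓ. -/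
open Classical in
/-- the class of colour `c` -/
noncomputable def hsF {V C : Type*} [Fintype V] (f : V → C) (c : C) : Finset V :=
  Finset.univ.filter (fun v => f v = c)

/-- some vertex of the first class is movable to the second -/
def hsMov {V C : Type*} (G : SimpleGraph V) (f : V → C) (c c' : C) : Prop :=
  ∃ y, f y = c ∧ ∀ x, G.Adj y x → f x ≠ c'

def hsProper {V C : Type*} (G : SimpleGraph V) (f : V → C) : Prop :=
  ∀ u v, G.Adj u v → f u ≠ f v

theorem hs_first_step {C : Type*} {r : C → C → Prop} {a c : C} (h : Relation.ReflTransGen r c a)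
    (hca : c ≠ a) : ∃ c', c' ≠ c ∧ r c c' ∧ Relation.ReflTransGen (fun x y => r x y ∧ y ≠ c) c' a := by
  have key : ∀ x, Relation.ReflTransGen r x a →
      (x ≠ c ∧ Relation.ReflTransGen (fun x y => r x y ∧ y ≠ c) x a) ∨
      ∃ c', c' ≠ c ∧ r c c' ∧ Relation.ReflTransGen (fun x y => r x y ∧ y ≠ c) c' a := by
    intro x hx
    induction hx using Relation.ReflTransGen.head_induction_on with
    | refl => exact Or.inl ⟨hca.symm, Relation.ReflTransGen.refl⟩
    | head h1 h2 ih =>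
      rename_i x y
      rcases ih with ⟨h3, h4⟩ | h3
      · by_cases hxc : x = c
        · subst hxc
          exact Or.inr ⟨y, h3, h1, h4⟩
        · exact Or.inl ⟨hxc, Relation.ReflTransGen.head ⟨h1, h3⟩ h4⟩
      · exact Or.inr h3
  rcases key c h with ⟨h1, _⟩ | h1
  · exact absurd rfl h1
  · exact h1

open Classical in
theorem hs_card_update {V C : Type*} [Fintype V] (f : V → C) (y : V) (b c : C) :
    (hsF (Function.update f y b) c).card + (if c = f y then 1 else 0)
      = (hsF f c).card + (if c = b then 1 else 0) := by
  have e1 : ∀ g : V → C, (hsF g c).card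
      = (if g y = c then 1 else 0) + ∑ v ∈ Finset.univ.erase y, (if g v = c then 1 else 0) := by
    intro g
    rw [Finset.add_sum_erase _ (fun v => if g v = c then 1 else 0) (Finset.mem_univ y)]
    simp [hsF]
  rw [e1, e1]
  have e2 : ∑ v ∈ Finset.univ.erase y, (if Function.update f y b v = c then 1 else 0)
      = ∑ v ∈ Finset.univ.erase y, (if f v = c then 1 else 0) := by
    apply Finset.sum_congr rfl
    intro v hv
    rw [Function.update_of_ne (Finset.ne_of_mem_erase hv)]
  rw [e2, Function.update_self]
  simp only [eq_comm (a := c)]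
  omega

open Classical in
theorem hs_shift {V C : Type*} [Fintype V] (G : SimpleGraph V) (f : V → C) (a : C)
    (hf : hsProper G f) : ∀ (n : ℕ) (S : Finset C) (c : C), S.card = n → c ∈ S →
    Relation.ReflTransGen (fun x y => hsMov G f x y ∧ y ∈ S) c a →
    ∃ f' : V → C, hsProper G f' ∧ (∀ v, f v ∉ S → f' v = f v) ∧ (∀ v, f v ∈ S → f' v ∈ S) ∧
      (∀ v, f' v = c → f v = c) ∧
      ∀ x, (hsF f' x).card + (if x = c then 1 else 0) = (hsF f x).card + (if x = a then 1 else 0) := by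
  intro n
  induction n with
  | zero =>
    intro S c hS hc
    rw [Finset.card_eq_zero] at hS
    simp [hS] at hc
  | succ n ih =>
    intro S c hS hc hp
    by_cases hca : c = a
    · subst hca
      exact ⟨f, hf, fun _ _ => rfl, fun _ h => h, fun _ h => h, fun _ => rfl⟩
    obtain ⟨c', hc'c, ⟨⟨y, hy, hyc'⟩, hc'S⟩, hp'⟩ := hs_first_step hp hca
    obtain ⟨f', h1, h2, h3, h4, h5⟩ := ih (S.erase c) c' (by rw [Finset.card_erase_of_mem hc]; omega)
      (Finset.mem_erase.2 ⟨hc'c, hc'S⟩)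
      (Relation.ReflTransGen.mono (fun x y h => ⟨h.1.1, Finset.mem_erase.2 ⟨h.2, h.1.2⟩⟩) _ _ hp')
    have hcls : ∀ v, f' v = c → f v = c := by
      intro v hv
      by_contra hne
      by_cases hvS : f v ∈ S.erase c
      · have := h3 v hvS
        rw [hv] at this
        simp at this
      · exact hne ((h2 v hvS).symm.trans hv)
    have hfy : f' y = c := by rw [h2 y (by simp [hy]), hy]
    refine ⟨Function.update f' y c', ?_, ?_, ?_, ?_, ?_⟩
    · intro u v huv
      have huv' : u ≠ v := huv.ne
      by_cases hu : u = y
      · subst hu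
        rw [Function.update_self, Function.update_of_ne huv'.symm]
        intro h
        exact hyc' v huv (h4 v h.symm)
      · by_cases hv : v = y
        · subst hv
          rw [Function.update_self, Function.update_of_ne hu]
          intro h
          exact hyc' u huv.symm (h4 u h)
        · rw [Function.update_of_ne hu, Function.update_of_ne hv]
          exact h1 u v huv
    · intro v hv
      have : v ≠ y := by rintro rfl; rw [hy] at hv; exact hv hc
      rw [Function.update_of_ne this]
      exact h2 v (fun h => hv (Finset.mem_of_mem_erase h))
    · intro v hv
      by_cases hvy : v = y
      · subst hvy; rw [Function.update_self]; exact hc'S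
      · rw [Function.update_of_ne hvy]
        by_cases hvc : f v = c
        · rw [h2 v (by simp [hvc])]; exact hv
        · exact Finset.mem_of_mem_erase (h3 v (Finset.mem_erase.2 ⟨hvc, hv⟩))
    · intro v hv
      by_cases hvy : v = y
      · subst hvy; exact hy
      · rw [Function.update_of_ne hvy] at hv
        exact hcls v hv
    · intro x
      have e1 := hs_card_update f' y c' x
      rw [hfy] at e1
      have e2 := h5 x
      omega

open Classical in
/-- the recolouring used in both cases -/
noncomputable def hsSwap {V C : Type*} (f g : V → C) (A : Finset C) (z w : V) (X : C) : V → C :=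
  fun v => if v = w then X else if v = z then f w else if f v ∈ A then f v else g v

open Classical in
theorem hs_swap_proper {V C : Type*} (G : SimpleGraph V) (f g : V → C) (A : Finset C)
    (z w : V) (X : C) (hf : hsProper G f) (hz : f z ∉ A) (hw : f w ∈ A)
    (hzw : ∀ x, G.Adj z x → f x = f w → x = w)
    (hgA : ∀ v, f v ∉ A → v ≠ z → g v ∉ A)
    (hg : ∀ u v, f u ∉ A → u ≠ z → f v ∉ A → v ≠ z → G.Adj u v → g u ≠ g v)
    (hXW : X ≠ f w)
    (hX : ∀ x, x ≠ z → G.Adj w x → (if f x ∈ A then f x else g x) ≠ X) :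
    hsProper G (hsSwap f g A z w X) := by
  have hzw' : z ≠ w := by rintro rfl; exact hz hw
  have half : ∀ u v, G.Adj u v → u = w → hsSwap f g A z w X u ≠ hsSwap f g A z w X v := by
    intro u v huv hu
    subst hu
    have hv : v ≠ u := huv.ne'
    simp only [hsSwap, if_true, if_neg hv]
    by_cases hvz : v = z
    · simpa [hvz] using hXW
    · simpa [hvz] using (hX v hvz huv).symm
  have half2 : ∀ u v, G.Adj u v → v ≠ w → u = z → hsSwap f g A z w X u ≠ hsSwap f g A z w X v := by
    intro u v huv hv hu
    subst hu
    have hvu : v ≠ u := huv.ne'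
    simp only [hsSwap, if_true, if_neg hv, if_neg hvu, if_neg hzw']
    by_cases hvA : f v ∈ A
    · rw [if_pos hvA]
      intro h
      exact hv (hzw v huv h.symm)
    · rw [if_neg hvA]
      intro h
      exact hgA v hvA hvu (h ▸ hw)
  intro u v huv
  by_cases hu : u = w
  · exact half u v huv hu
  by_cases hv : v = w
  · exact (half v u huv.symm hv).symm
  by_cases huz : u = z
  · exact half2 u v huv hv huz
  by_cases hvz : v = z
  · exact (half2 v u huv.symm hu hvz).symm
  simp only [hsSwap, if_neg hu, if_neg hv, if_neg huz, if_neg hvz]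
  by_cases huA : f u ∈ A <;> by_cases hvA : f v ∈ A
  · simpa [huA, hvA] using hf u v huv
  · simp only [huA, hvA, if_true, if_false]
    intro h; exact hgA v hvA hvz (h ▸ huA)
  · simp only [huA, hvA, if_true, if_false]
    intro h; exact hgA u huA huz (h ▸ hvA)
  · simpa [huA, hvA] using hg u v huA huz hvA hvz huv

open Classical in
theorem hs_swap_card {V C : Type*} [Fintype V] (f g : V → C) (A : Finset C)
    (z w : V) (X : C) (s : ℕ) (hz : f z ∉ A) (hw : f w ∈ A)
    (hgA : ∀ v, f v ∉ A → v ≠ z → g v ∉ A)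
    (hgs : ∀ c, c ∉ A → (Finset.univ.filter (fun v => f v ∉ A ∧ v ≠ z ∧ g v = c)).card = s) (c : C) :
    (hsF (hsSwap f g A z w X) c).card
      = (if c ∈ A then (hsF f c).card else s) + (if c = X then 1 else 0) := by
  have hzw' : z ≠ w := by rintro rfl; exact hz hw
  -- first the colouring in which `w` keeps its colour
  set h0 : V → C := fun v => if f v ∈ A then f v else if v = z then f w else g v with hh0
  have e1 : hsSwap f g A z w X = Function.update h0 w X := by
    funext v
    by_cases hv : v = w
    · subst hv; simp [hsSwap]
    · rw [Function.update_of_ne hv]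
      simp only [hsSwap, hh0, if_neg hv]
      by_cases hvz : v = z
      · subst hvz; simp [hz]
      · simp [hvz]
  have h0w : h0 w = f w := by simp [hh0, hw]
  have e2 := hs_card_update h0 w X c
  rw [h0w, ← e1] at e2
  have e3 : (hsF h0 c).card = (if c ∈ A then (hsF f c).card else s) + (if c = f w then 1 else 0) := by
    by_cases hc : c ∈ A
    · rw [if_pos hc]
      by_cases hcw : c = f w
      · rw [if_pos hcw]
        have : hsF h0 c = insert z (hsF f c) := by
          ext v
          simp only [hsF, hh0, Finset.mem_filter, Finset.mem_univ, true_and, Finset.mem_insert]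
          by_cases hvz : v = z
          · subst hvz; simp [hz, hcw]
          · by_cases hvA : f v ∈ A
            · simp [hvA, hvz]
            · have := hgA v hvA hvz
              simp only [hvA, hvz, if_false, false_or]
              constructor
              · rintro rfl; exact absurd hc this
              · rintro rfl; exact absurd hc hvA
        rw [this, Finset.card_insert_of_notMem]
        simp only [hsF, Finset.mem_filter, Finset.mem_univ, true_and]
        rintro rfl; exact hz hc
      · rw [if_neg hcw, add_zero]
        congr 1
        ext v
        simp only [hsF, hh0, Finset.mem_filter, Finset.mem_univ, true_and]
        by_cases hvA : f v ∈ A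
        · simp [hvA]
        · simp only [hvA, if_false]
          by_cases hvz : v = z
          · subst hvz
            simp only [if_true]
            constructor
            · intro h; exact absurd h.symm hcw
            · rintro rfl; exact absurd hc hvA
          · have := hgA v hvA hvz
            simp only [hvz, if_false]
            constructor
            · rintro rfl; exact absurd hc this
            · rintro rfl; exact absurd hc hvA
    · have hcw : c ≠ f w := by rintro rfl; exact hc hw
      rw [if_neg hc, if_neg hcw, add_zero, ← hgs c hc]
      congr 1
      ext v
      simp only [hsF, hh0, Finset.mem_filter, Finset.mem_univ, true_and]
      by_cases hvA : f v ∈ A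
      · simp only [hvA, if_true, not_true, false_and, iff_false]
        rintro rfl; exact hc hvA
      · by_cases hvz : v = z
        · simp [hvz, hz, hcw.symm]
        · simp [hvA, hvz]
  omega

open Classical in
theorem hs_block {C : Type*} [Fintype C] (r : C → C → Prop) (a : C) (A : Finset C)
    (hA : ∀ c, c ∈ A ↔ Relation.ReflTransGen r c a) (h2 : 2 ≤ A.card) :
    ∃ (U : C) (T : Finset C), U ∈ A ∧ T ⊆ A ∧ T.Nonempty ∧ U ∉ T ∧ a ∉ T ∧
      (∀ W ∈ T, ∀ c ∈ A, c ≠ W → Relation.ReflTransGen (fun x y => r x y ∧ y ≠ W) c a) ∧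
      (∀ W ∈ T, ∀ c ∈ A, c ∉ T → c ≠ U → ¬ r W c) := by
  let R : C → C → Prop := fun U c => Relation.ReflTransGen (fun x y => r x y ∧ y ≠ U) c a
  let T : C → Finset C := fun U => A.filter (fun c => c ≠ U ∧ ¬ R U c)
  have haA : a ∈ A := (hA a).2 Relation.ReflTransGen.refl
  have memT : ∀ U c, c ∈ T U ↔ c ∈ A ∧ c ≠ U ∧ ¬ R U c := by
    intro U c; simp [T]
  have haT : ∀ U, a ∉ T U := by
    intro U h
    exact ((memT U a).1 h).2.2 Relation.ReflTransGen.refl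
  have hTa : (T a).Nonempty := by
    obtain ⟨c, hc, hca⟩ := Finset.exists_mem_ne (by omega : 1 < A.card) a
    refine ⟨c, (memT a c).2 ⟨hc, hca, ?_⟩⟩
    intro h
    rcases Relation.ReflTransGen.cases_tail h with h | ⟨d, _, h⟩
    · exact hca h.symm
    · exact h.2 rfl
  obtain ⟨U, hU, hmin⟩ := Finset.exists_min_image (A.filter (fun U => (T U).Nonempty))
    (fun U => (T U).card) ⟨a, by simp [haA, hTa]⟩
  rw [Finset.mem_filter] at hU
  refine ⟨U, T U, hU.1, Finset.filter_subset _ _, hU.2, ?_, haT U, ?_, ?_⟩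
  · intro h; exact ((memT U U).1 h).2.1 rfl
  · intro W hW c hc hcW
    by_contra hcon
    have hW' := (memT U W).1 hW
    have hWne : (T W).Nonempty := ⟨c, (memT W c).2 ⟨hc, hcW, hcon⟩⟩
    have hss : T W ⊂ T U := by
      rw [Finset.ssubset_iff_of_subset]
      · exact ⟨W, hW, fun h => ((memT W W).1 h).2.1 rfl⟩
      · intro X hX
        have hX' := (memT W X).1 hX
        -- a path avoiding `U` from `X` avoids `W`
        have key : ∀ x, R U x → R W x := by
          intro x hx
          have : R W x ∧ R U x := by
            refine Relation.ReflTransGen.head_induction_on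
              (motive := fun x _ => R W x ∧ R U x) hx ⟨Relation.ReflTransGen.refl, Relation.ReflTransGen.refl⟩ ?_
            intro x y h1 h2 ih
            refine ⟨Relation.ReflTransGen.head ⟨h1.1, ?_⟩ ih.1, Relation.ReflTransGen.head h1 h2⟩
            rintro rfl
            exact hW'.2.2 ih.2
          exact this.1
        refine (memT U X).2 ⟨hX'.1, ?_, fun h => hX'.2.2 (key X h)⟩
        rintro rfl
        by_cases hXa : X = a
        · subst hXa
          exact hX'.2.2 Relation.ReflTransGen.refl
        · obtain ⟨c', h1, h2, h3⟩ := hs_first_step ((hA X).1 hX'.1) hXa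
          apply hX'.2.2
          refine Relation.ReflTransGen.head ⟨h2, ?_⟩ (key c' h3)
          rintro rfl
          exact hW'.2.2 h3
    have := hmin W (Finset.mem_filter.2 ⟨hW'.1, hWne⟩)
    have := Finset.card_lt_card hss
    omega
  · intro W hW c hc hcT hcU hr
    have hW' := (memT U W).1 hW
    apply hW'.2.2
    have : R U c := by
      by_contra h
      exact hcT ((memT U c).2 ⟨hc, hcU, h⟩)
    exact Relation.ReflTransGen.head ⟨hr, hcU⟩ this

open Classical in
theorem hs_dB_le {V C : Type*} [Fintype V] (G : SimpleGraph V) (f : V → C) (A A' : Finset C)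
    (hA' : A' ⊆ A) (y : V) (h : ∀ c ∈ A', ∃ x, G.Adj y x ∧ f x = c) :
    (Finset.univ.filter (fun x => G.Adj y x ∧ f x ∉ A)).card + A'.card
      ≤ (Finset.univ.filter (fun x => G.Adj y x)).card := by
  have h1 : A'.card ≤ (Finset.univ.filter (fun x => G.Adj y x ∧ f x ∈ A)).card := by
    refine le_trans (Finset.card_le_card ?_) (Finset.card_image_le (f := f))
    intro c hc
    obtain ⟨x, hx, rfl⟩ := h c hc
    exact Finset.mem_image.2 ⟨x, by simp [hx, hA' hc], rfl⟩
  have h2 := Finset.card_filter_add_card_filter_not (s := Finset.univ.filter (fun x => G.Adj y x))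
    (fun x => f x ∈ A)
  rw [Finset.filter_filter, Finset.filter_filter] at h2
  omega

/-- `w` is a solo neighbour of `z` -/
def hsSolo {V C : Type*} (G : SimpleGraph V) (f : V → C) (A T : Finset C) (w z : V) : Prop :=
  f w ∈ T ∧ f z ∉ A ∧ G.Adj z w ∧ ∀ x, G.Adj z x → f x = f w → x = w

open Classical in
theorem hs_solo_count {V C : Type*} [Fintype V] (G : SimpleGraph V) (f : V → C) (A T : Finset C)
    (hTA : T ⊆ A) (y : V) (hy : f y ∉ A) (h : ∀ c ∈ A, ∃ x, G.Adj y x ∧ f x = c) :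
    A.card + T.card + (Finset.univ.filter (fun x => G.Adj y x ∧ f x ∉ A)).card
      ≤ (Finset.univ.filter (fun x => G.Adj y x)).card
        + (Finset.univ.filter (fun w => hsSolo G f A T w y)).card := by
  have h2 := Finset.card_filter_add_card_filter_not (s := Finset.univ.filter (fun x => G.Adj y x))
    (fun x => f x ∈ A)
  rw [Finset.filter_filter, Finset.filter_filter] at h2
  have h3 := Finset.card_eq_sum_card_fiberwise (f := f) (t := A)
    (s := Finset.univ.filter (fun x => G.Adj y x ∧ f x ∈ A)) (by intro x hx; simp at hx; exact hx.2)
  have h4 := Finset.card_eq_sum_card_fiberwise (f := f) (t := A)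
    (s := Finset.univ.filter (fun w => hsSolo G f A T w y))
    (by intro x hx; simp at hx; exact hTA hx.1)
  have h5 : A.card + T.card = ∑ c ∈ A, (1 + if c ∈ T then 1 else 0) := by
    rw [Finset.sum_add_distrib]
    simp [Finset.inter_eq_right.2 hTA]
  have h6 : A.card + T.card ≤ (Finset.univ.filter (fun x => G.Adj y x ∧ f x ∈ A)).card
      + (Finset.univ.filter (fun w => hsSolo G f A T w y)).card := by
    rw [h5, h3, h4, ← Finset.sum_add_distrib]
    apply Finset.sum_le_sum
    intro c hc
    obtain ⟨x, hx, hxc⟩ := h c hc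
    have hxm : x ∈ (Finset.univ.filter (fun x => G.Adj y x ∧ f x ∈ A)).filter (fun x => f x = c) := by
      simp [hx, hxc, hc]
    have hpos := Finset.card_pos.2 ⟨x, hxm⟩
    by_cases hcT : c ∈ T
    · rw [if_pos hcT]
      by_cases hu : ∀ x', G.Adj y x' → f x' = c → x' = x
      · have : x ∈ (Finset.univ.filter (fun w => hsSolo G f A T w y)).filter (fun x => f x = c) := by
          simp only [Finset.mem_filter, Finset.mem_univ, true_and]
          exact ⟨⟨hxc ▸ hcT, hy, hx, fun x' h1 h2 => hu x' h1 (h2.trans hxc)⟩, hxc⟩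
        have := Finset.card_pos.2 ⟨x, this⟩
        omega
      · push Not at hu
        obtain ⟨x', h1, h2, h3⟩ := hu
        have : 1 < ((Finset.univ.filter (fun x => G.Adj y x ∧ f x ∈ A)).filter (fun x => f x = c)).card :=
          Finset.one_lt_card.2 ⟨x, hxm, x', by simp [h1, h2, hc], h3.symm⟩
        omega
    · rw [if_neg hcT]; omega
  omega

open Classical in
theorem hs_count {V C : Type*} [Fintype V] (G : SimpleGraph V) (f : V → C)
    (A T : Finset C) (U : C) (hTA : T ⊆ A) (hTn : T.Nonempty) (hUA : U ∈ A) (hUT : U ∉ T)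
    (k q s : ℕ) (hk : q + A.card = k) (hq : 1 ≤ q)
    (hdeg : ∀ v, (Finset.univ.filter (fun x => G.Adj v x)).card < k)
    (hB : (Finset.univ.filter (fun v => f v ∉ A)).card = q * s + 1)
    (hT : ∀ c ∈ T, (hsF f c).card = s)
    (h1 : ∀ y, f y ∉ A → ∀ c ∈ A, ∃ x, G.Adj y x ∧ f x = c)
    (h2 : ∀ y, f y ∈ T → ∀ c ∈ A, c ∉ T → c ≠ U → ∃ x, G.Adj y x ∧ f x = c)
    (h3 : ∀ w z, hsSolo G f A T w z → ∀ c ∈ A, c ≠ f w → ∃ x, G.Adj w x ∧ f x = c)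
    (h4 : ∀ w z z', hsSolo G f A T w z → hsSolo G f A T w z' → z ≠ z' → G.Adj z z') : False := by
  set B := Finset.univ.filter (fun v => f v ∉ A) with hBdef
  let dB : V → ℕ := fun y => (Finset.univ.filter (fun x => G.Adj y x ∧ f x ∉ A)).card
  have dB_B : ∀ y, f y ∉ A → dB y + 1 ≤ q := by
    intro y hy
    have := hs_dB_le G f A A le_rfl y (h1 y hy)
    have := hdeg y
    simp only [dB]; omega
  have dB_solo : ∀ w z, hsSolo G f A T w z → dB w ≤ q := by
    intro w z hwz
    have e1 := hs_dB_le G f A (A.erase (f w)) (Finset.erase_subset _ _) w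
      (fun c hc => h3 w z hwz c (Finset.mem_of_mem_erase hc) (Finset.ne_of_mem_erase hc))
    have e2 := hdeg w
    have e3 := Finset.card_erase_add_one (hTA hwz.1)
    simp only [dB]; omega
  have dB_T : ∀ y, f y ∈ T → dB y ≤ q + T.card := by
    intro y hy
    have e1 := hs_dB_le G f A ((A \ T).erase U)
      ((Finset.erase_subset _ _).trans Finset.sdiff_subset) y
      (fun c hc => by
        rw [Finset.mem_erase, Finset.mem_sdiff] at hc
        exact h2 y hy c hc.2.1 hc.2.2 hc.1)
    have e2 := hdeg y
    have e3 := Finset.card_erase_add_one (Finset.mem_sdiff.2 ⟨hUA, hUT⟩)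
    have e4 := Finset.card_sdiff_add_card_eq_card hTA
    simp only [dB]; omega
  -- step (a)
  have hqt : q < T.card := by
    by_contra hcon
    obtain ⟨W, hW⟩ := hTn
    let wt : V → ℕ := fun x => if ∃ z, hsSolo G f A T x z then 2 else 1
    have e1 : ∀ y ∈ B, 2 ≤ ∑ x ∈ hsF f W, (if G.Adj x y then wt x else 0) := by
      intro y hy
      have hyA : f y ∉ A := by simpa [hBdef] using hy
      obtain ⟨x, hx, hxW⟩ := h1 y hyA W (hTA hW)
      have hxF : x ∈ hsF f W := by simp [hsF, hxW]
      by_cases hu : ∀ x', G.Adj y x' → f x' = W → x' = x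
      · have hs : hsSolo G f A T x y :=
          ⟨hxW ▸ hW, hyA, hx, fun x' h1 h2 => hu x' h1 (h2.trans hxW)⟩
        refine le_trans ?_ (Finset.single_le_sum (fun _ _ => Nat.zero_le _) hxF)
        have : ∃ z, hsSolo G f A T x z := ⟨y, hs⟩
        simp [hx.symm, wt, this]
      · push Not at hu
        obtain ⟨x', h1', h2', h3'⟩ := hu
        have hx'F : x' ∈ hsF f W := by simp [hsF, h2']
        have hsub : ({x, x'} : Finset V) ⊆ hsF f W := by
          intro v hv
          simp only [Finset.mem_insert, Finset.mem_singleton] at hv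
          rcases hv with rfl | rfl <;> assumption
        refine le_trans ?_ (Finset.sum_le_sum_of_subset hsub)
        rw [Finset.sum_pair h3'.symm, if_pos hx.symm, if_pos h1'.symm]
        have hwt : ∀ x, 1 ≤ wt x := by intro x; simp only [wt]; split_ifs <;> omega
        have := hwt x
        have := hwt x'
        omega
    have e2 := Finset.sum_le_sum e1
    rw [Finset.sum_comm] at e2
    have e3 : ∀ x ∈ hsF f W, ∑ y ∈ B, (if G.Adj x y then wt x else 0) ≤ 2 * q := by
      intro x hx
      have hxW : f x = W := by simpa [hsF] using hx
      have : ∑ y ∈ B, (if G.Adj x y then wt x else 0) = dB x * wt x := by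
        rw [← Finset.sum_filter, Finset.sum_const, smul_eq_mul, hBdef, Finset.filter_filter]
        simp only [dB, and_comm]
      rw [this]
      by_cases hs : ∃ z, hsSolo G f A T x z
      · obtain ⟨z, hz⟩ := hs
        have e := dB_solo x z hz
        have : wt x = 2 := if_pos ⟨z, hz⟩
        rw [this]; omega
      · have e := dB_T x (hxW ▸ hW)
        have : wt x = 1 := if_neg hs
        rw [this]; omega
    have e4 := Finset.sum_le_sum e3
    rw [Finset.sum_const, smul_eq_mul, hT W hW] at e4
    rw [Finset.sum_const, smul_eq_mul, hB] at e2
    have := e2.trans e4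
    nlinarith
  -- step (b)
  let Sw : V → Finset V := fun w => Finset.univ.filter (fun z => hsSolo G f A T w z)
  let Sz : V → Finset V := fun z => Finset.univ.filter (fun w => hsSolo G f A T w z)
  have hσ : ∀ z, f z ∉ A → T.card + 1 + dB z ≤ (Sz z).card + q := by
    intro z hz
    have e1 := hs_solo_count G f A T hTA z hz (h1 z hz)
    have e2 := hdeg z
    simp only [dB, Sz]; omega
  have hclq : ∀ w z, hsSolo G f A T w z → (Sw w).card ≤ dB z + 1 := by
    intro w z hwz
    have hz : z ∈ Sw w := by simp [Sw, hwz]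
    rw [← Finset.card_erase_add_one hz]
    gcongr
    apply Finset.card_le_card
    intro x hx
    simp only [Sw, Finset.mem_erase, Finset.mem_filter, Finset.mem_univ, true_and] at hx ⊢
    exact ⟨h4 w z x hwz hx.2 hx.1.symm, hx.2.2.1⟩
  have lower : ∀ z ∈ B, (T.card : ℚ) ≤ ∑ w ∈ Sz z, (q : ℚ) / ((Sw w).card : ℚ) := by
    intro z hz
    have hzA : f z ∉ A := by simpa [hBdef] using hz
    have e1 := hσ z hzA
    have e2 := dB_B z hzA
    have e3 : ∀ w ∈ Sz z, (q : ℚ) / ((dB z + 1 : ℕ) : ℚ) ≤ (q : ℚ) / ((Sw w).card : ℚ) := by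
      intro w hw
      have hw' : hsSolo G f A T w z := by simpa [Sz] using hw
      have hpos : 0 < (Sw w).card := Finset.card_pos.2 ⟨z, by simp [Sw, hw']⟩
      have := hclq w z hw'
      gcongr
    refine le_trans ?_ (Finset.sum_le_sum e3)
    rw [Finset.sum_const, nsmul_eq_mul, ← mul_div_assoc, le_div_iff₀ (by positivity)]
    have e1' : (T.card : ℚ) + (dB z + 1 : ℕ) ≤ (Sz z).card + q := by
      exact_mod_cast (by omega : T.card + (dB z + 1) ≤ (Sz z).card + q)
    have e2' : ((dB z + 1 : ℕ) : ℚ) ≤ q := by exact_mod_cast e2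
    have e4 : (q : ℚ) ≤ T.card := by exact_mod_cast hqt.le
    have e5 : (0 : ℚ) ≤ q := by positivity
    nlinarith [mul_nonneg (sub_nonneg.2 e4) (sub_nonneg.2 e2'), mul_le_mul_of_nonneg_right e1' e5]
  have tot := Finset.sum_le_sum lower
  rw [Finset.sum_const, nsmul_eq_mul, hB] at tot
  let TV : Finset V := Finset.univ.filter (fun v => f v ∈ T)
  have swap : ∑ z ∈ B, ∑ w ∈ Sz z, (q : ℚ) / ((Sw w).card : ℚ)
      = ∑ w ∈ TV, ∑ z ∈ Sw w, (q : ℚ) / ((Sw w).card : ℚ) := by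
    apply Finset.sum_comm'
    intro z w
    simp only [hBdef, Sz, TV, Sw, Finset.mem_filter, Finset.mem_univ, true_and]
    constructor
    · rintro ⟨_, h⟩; exact ⟨h, h.1⟩
    · rintro ⟨h, _⟩; exact ⟨h.2.1, h⟩
  have upper : ∀ w ∈ TV, ∑ z ∈ Sw w, (q : ℚ) / ((Sw w).card : ℚ) ≤ q := by
    intro w _
    rw [Finset.sum_const, nsmul_eq_mul]
    by_cases h0 : ((Sw w).card : ℚ) = 0
    · rw [h0]; simp
    · rw [mul_div_cancel₀ _ h0]
  have tot2 := Finset.sum_le_sum upper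
  have hTV : TV.card = T.card * s := by
    rw [Finset.card_eq_sum_card_fiberwise (f := f) (t := T) (s := TV)
      (by intro x hx; simpa [TV] using hx), Finset.sum_const_nat]
    intro c hc
    rw [← hT c hc]
    congr 1
    ext v
    simp only [TV, hsF, Finset.mem_filter, Finset.mem_univ, true_and]
    constructor
    · exact fun h => h.2
    · rintro rfl; exact ⟨hc, rfl⟩
  rw [Finset.sum_const, nsmul_eq_mul, hTV] at tot2
  rw [swap] at tot
  have fin := tot.trans tot2
  have fin' : (q * s + 1) * T.card ≤ T.card * s * q := by exact_mod_cast fin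
  nlinarith

open Classical in
theorem hs_main {V C : Type*} [Fintype V] [Fintype C] (G : SimpleGraph V) (s : ℕ)
    (hdeg : ∀ v, (Finset.univ.filter (fun x => G.Adj v x)).card < Fintype.card C)
    (hIH : ∀ (S : Finset V) (Q : Finset C), S.card < Fintype.card V → S.card = Q.card * s →
      (∀ v ∈ S, (S.filter (fun x => G.Adj v x)).card < Q.card) →
      ∃ g : V → C, (∀ v ∈ S, g v ∈ Q) ∧ (∀ u ∈ S, ∀ v ∈ S, G.Adj u v → g u ≠ g v) ∧
        ∀ c ∈ Q, (S.filter (fun v => g v = c)).card = s) :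
    ∀ (n : ℕ) (f : V → C) (a b : C),
      (Finset.univ.filter (fun c => ¬ Relation.ReflTransGen (hsMov G f) c a)).card = n →
      hsProper G f →
      (∀ c, (hsF f c).card + (if c = a then 1 else 0) = s + (if c = b then 1 else 0)) →
      ∃ f' : V → C, hsProper G f' ∧ ∀ c, (hsF f' c).card = s := by
  intro n
  induction n using Nat.strong_induction_on with
  | _ n ih =>
  intro f a b hn hf hcnt
  set A : Finset C := Finset.univ.filter (fun c => Relation.ReflTransGen (hsMov G f) c a) with hAdef
  have hA : ∀ c, c ∈ A ↔ Relation.ReflTransGen (hsMov G f) c a := by intro c; simp [hAdef]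
  by_cases hb : b ∈ A
  · obtain ⟨f', h1, -, -, -, h5⟩ := hs_shift G f a hf _ Finset.univ b rfl (Finset.mem_univ _)
      (Relation.ReflTransGen.mono (fun x y h => ⟨h, Finset.mem_univ _⟩) _ _ ((hA b).1 hb))
    refine ⟨f', h1, fun c => ?_⟩
    have := h5 c
    have := hcnt c
    omega
  have haA : a ∈ A := (hA a).2 Relation.ReflTransGen.refl
  have hAcomp : Aᶜ.card + A.card = Fintype.card C := Finset.card_compl_add_card A
  set q := Aᶜ.card with hq
  have hq1 : 1 ≤ q := Finset.card_pos.2 ⟨b, by simpa using hb⟩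
  have hs1 : 1 ≤ s := by
    have := hcnt a
    have hab : a ≠ b := by rintro rfl; exact hb haA
    simp [hab] at this
    omega
  have hcA : ∀ c ∈ A, (hsF f c).card + (if c = a then 1 else 0) = s := by
    intro c hc
    have hcb : c ≠ b := by rintro rfl; exact hb hc
    have := hcnt c
    rwa [if_neg hcb] at this
  have hBcard : (Finset.univ.filter (fun v => f v ∉ A)).card = q * s + 1 := by
    rw [Finset.card_eq_sum_card_fiberwise (f := f) (t := Aᶜ)
      (by intro x hx; simpa using hx)]
    have : ∀ c ∈ Aᶜ, ((Finset.univ.filter (fun v => f v ∉ A)).filter (fun v => f v = c)).card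
        = s + (if c = b then 1 else 0) := by
      intro c hc
      rw [Finset.mem_compl] at hc
      have hca : c ≠ a := by rintro rfl; exact hc haA
      rw [← hcnt c, if_neg hca, add_zero]
      congr 1
      ext v
      simp only [hsF, Finset.mem_filter, Finset.mem_univ, true_and]
      constructor
      · exact fun h => h.2
      · rintro rfl; exact ⟨hc, rfl⟩
    rw [Finset.sum_congr rfl this, Finset.sum_add_distrib]
    simp [hb, hq]
  have h1 : ∀ y, f y ∉ A → ∀ c ∈ A, ∃ x, G.Adj y x ∧ f x = c := by
    intro y hy c hc
    by_contra hcon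
    push Not at hcon
    exact hy ((hA _).2 (Relation.ReflTransGen.head ⟨y, rfl, hcon⟩ ((hA c).1 hc)))
  have hdB : ∀ y, f y ∉ A → (Finset.univ.filter (fun x => G.Adj y x ∧ f x ∉ A)).card < q := by
    intro y hy
    have := hs_dB_le G f A A le_rfl y (h1 y hy)
    have := hdeg y
    omega
  -- `A` has at least two classes
  have hA2 : 2 ≤ A.card := by
    by_contra hcon
    have hA1 : A.card = 1 := by
      have := Finset.card_pos.2 ⟨a, haA⟩
      omega
    have hAa : ∀ c, c ∈ A → c = a := by
      intro c hc
      exact Finset.card_le_one.1 (by omega) c hc a haA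
    have e1 : ∀ y ∈ Finset.univ.filter (fun v => f v ∉ A),
        1 ≤ ∑ x ∈ hsF f a, (if G.Adj x y then 1 else 0) := by
      intro y hy
      obtain ⟨x, hx, hxa⟩ := h1 y (by simpa using hy) a haA
      refine le_trans ?_ (Finset.single_le_sum (fun _ _ => Nat.zero_le _)
        (show x ∈ hsF f a by simp [hsF, hxa]))
      simp [hx.symm]
    have e2 := Finset.sum_le_sum e1
    rw [Finset.sum_comm] at e2
    have e3 : ∀ x ∈ hsF f a, ∑ y ∈ Finset.univ.filter (fun v => f v ∉ A),
        (if G.Adj x y then 1 else 0) ≤ q := by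
      intro x hx
      rw [← Finset.sum_filter, Finset.sum_const, smul_eq_mul, mul_one, Finset.filter_filter]
      have : (Finset.univ.filter (fun v => f v ∉ A ∧ G.Adj x v)).card
          ≤ (Finset.univ.filter (fun v => G.Adj x v)).card := by
        apply Finset.card_le_card
        intro v hv
        simp at hv ⊢
        exact hv.2
      have := hdeg x
      omega
    have e4 := Finset.sum_le_sum e3
    rw [Finset.sum_const, smul_eq_mul] at e4
    rw [Finset.sum_const, smul_eq_mul, hBcard] at e2
    have e5 := hcA a haA
    rw [if_pos rfl] at e5
    have := e2.trans e4
    nlinarith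
  obtain ⟨U, T, hUA, hTA, hTn, hUT, haT, hterm, hblk⟩ := hs_block (hsMov G f) a A hA hA2
  -- the induction hypothesis, applied to `B - z`
  have hcolB : ∀ z, f z ∉ A → ∃ g : V → C, (∀ v, f v ∉ A → v ≠ z → g v ∉ A) ∧
      (∀ u v, f u ∉ A → u ≠ z → f v ∉ A → v ≠ z → G.Adj u v → g u ≠ g v) ∧
      ∀ c, c ∉ A → (Finset.univ.filter (fun v => f v ∉ A ∧ v ≠ z ∧ g v = c)).card = s := by
    intro z hz
    have hzB : z ∈ Finset.univ.filter (fun v => f v ∉ A) := by simpa using hz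
    obtain ⟨g, g1, g2, g3⟩ := hIH ((Finset.univ.filter (fun v => f v ∉ A)).erase z) Aᶜ
      (lt_of_lt_of_le (Finset.card_erase_lt_of_mem hzB) (Finset.card_le_univ _))
      (by rw [Finset.card_erase_of_mem hzB, hBcard]; simp [hq])
      (by
        intro v hv
        simp at hv
        refine lt_of_le_of_lt (Finset.card_le_card ?_) (hdB v hv.2)
        intro x hx
        simp at hx ⊢
        exact ⟨hx.2, hx.1.2⟩)
    refine ⟨g, ?_, ?_, ?_⟩
    · intro v hv hvz
      simpa using g1 v (by simp [hv, hvz])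
    · intro u v hu huz hv hvz
      exact g2 u (by simp [hu, huz]) v (by simp [hv, hvz])
    · intro c hc
      rw [← g3 c (by simpa using hc)]
      congr 1
      ext v
      simp only [Finset.mem_filter, Finset.mem_univ, true_and, Finset.mem_erase]
      tauto
  by_cases case1 : ∃ w z X, hsSolo G f A T w z ∧ X ∈ A ∧ X ≠ f w ∧ ∀ x, G.Adj w x → f x ≠ X
  · skip
    obtain ⟨w, z, X, hwz, hXA, hXw, hX⟩ := case1
    obtain ⟨hwT, hzA, hadj, huniq⟩ := hwz
    obtain ⟨g, g1, g2, g3⟩ := hcolB z hzA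
    have hpath : Relation.ReflTransGen (fun x y => hsMov G f x y ∧ y ∈ A.erase (f w)) X a := by
      refine Relation.ReflTransGen.head_induction_on
        (motive := fun x _ => Relation.ReflTransGen (fun x y => hsMov G f x y ∧ y ∈ A.erase (f w)) x a)
        (hterm (f w) hwT X hXA hXw) Relation.ReflTransGen.refl ?_
      intro x y hxy hy ihy
      refine Relation.ReflTransGen.head ⟨hxy.1, Finset.mem_erase.2 ⟨hxy.2, (hA y).2 ?_⟩⟩ ihy
      exact Relation.ReflTransGen.mono (fun _ _ h => h.1) _ _ hy
    obtain ⟨f', p1, p2, p3, p4, p5⟩ := hs_shift G f a hf _ (A.erase (f w)) X rfl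
      (Finset.mem_erase.2 ⟨hXw, hXA⟩) hpath
    have hmem : ∀ v, f' v ∈ A ↔ f v ∈ A := by
      intro v
      by_cases hv : f v ∈ A.erase (f w)
      · exact ⟨fun _ => Finset.mem_of_mem_erase hv, fun _ => Finset.mem_of_mem_erase (p3 v hv)⟩
      · rw [p2 v hv]
    have hf'w : f' w = f w := p2 w (by simp)
    have hf'W : ∀ v, f' v = f w → f v = f w := by
      intro v hv
      by_cases hv' : f v ∈ A.erase (f w)
      · have := p3 v hv'
        rw [hv] at this
        simp at this
      · rw [← p2 v hv', hv]
    refine ⟨hsSwap f' g A z w X, ?_, ?_⟩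
    · apply hs_swap_proper G f' g A z w X p1
      · rwa [hmem]
      · rw [hmem]; exact hTA hwT
      · intro x hx hxw
        rw [hf'w] at hxw
        exact huniq x hx (hf'W x hxw)
      · intro v hv hvz
        rw [hmem] at hv
        exact g1 v hv hvz
      · intro u v hu huz hv hvz
        rw [hmem] at hu hv
        exact g2 u v hu huz hv hvz
      · rwa [hf'w]
      · intro x hxz hx
        by_cases hxA : f' x ∈ A
        · rw [if_pos hxA]
          intro h
          exact hX x hx (p4 x h)
        · rw [if_neg hxA]
          intro h
          rw [hmem] at hxA
          exact g1 x hxA hxz (h ▸ hXA)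
    · intro c
      rw [hs_swap_card f' g A z w X s (by rwa [hmem]) (by rw [hmem]; exact hTA hwT)
        (by intro v hv hvz; rw [hmem] at hv; exact g1 v hv hvz)
        (by intro c hc; rw [← g3 c hc]; simp only [hmem]) c]
      by_cases hc : c ∈ A
      · rw [if_pos hc]
        have := p5 c
        have := hcA c hc
        omega
      · have : c ≠ X := by rintro rfl; exact hc hXA
        rw [if_neg hc, if_neg this, add_zero]
  push Not at case1
  by_cases case2 : ∃ w z z', hsSolo G f A T w z ∧ hsSolo G f A T w z' ∧ z ≠ z' ∧ ¬ G.Adj z z'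
  · skip
    obtain ⟨w, z, z', hwz, hwz', hzz', hnadj⟩ := case2
    have hmv := case1 w z
    obtain ⟨g, g1, g2, g3⟩ := hcolB z hwz.2.1
    have hwA : f w ∈ A := hTA hwz.1
    have hwne : f w ≠ a := by intro h; exact haT (h ▸ hwz.1)
    have hdw : (Finset.univ.filter (fun x => G.Adj w x ∧ f x ∉ A)).card ≤ q := by
      have e1 := hs_dB_le G f A (A.erase (f w)) (Finset.erase_subset _ _) w
        (fun c hc => hmv c hwz (Finset.mem_of_mem_erase hc) (Finset.ne_of_mem_erase hc))
      have e2 := hdeg w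
      have e3 := Finset.card_erase_add_one hwA
      omega
    obtain ⟨Y, hYA, hY⟩ : ∃ Y, Y ∉ A ∧ ∀ x, f x ∉ A → x ≠ z → G.Adj w x → g x ≠ Y := by
      by_contra hcon
      push Not at hcon
      have hzm : z ∈ Finset.univ.filter (fun x => G.Adj w x ∧ f x ∉ A) := by
        simp [hwz.2.1, hwz.2.2.1.symm]
      have e1 : Aᶜ ⊆ ((Finset.univ.filter (fun x => G.Adj w x ∧ f x ∉ A)).erase z).image g := by
        intro c hc
        obtain ⟨x, x1, x2, x3, x4⟩ := hcon c (by simpa using hc)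
        exact Finset.mem_image.2 ⟨x, by simp [x1, x2, x3], x4⟩
      have e2 := (Finset.card_le_card e1).trans Finset.card_image_le
      have e3 := Finset.card_erase_add_one hzm
      omega
    have hYw : Y ≠ f w := by rintro rfl; exact hYA hwA
    set h := hsSwap f g A z w Y with hh
    have hhp : hsProper G h := by
      apply hs_swap_proper G f g A z w Y hf hwz.2.1 hwA hwz.2.2.2 g1 g2 hYw
      intro x hxz hx
      by_cases hxA : f x ∈ A
      · rw [if_pos hxA]
        rintro rfl; exact hYA hxA
      · rw [if_neg hxA]
        exact hY x hxA hxz hx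
    have hhc : ∀ c, (hsF h c).card + (if c = a then 1 else 0) = s + (if c = Y then 1 else 0) := by
      intro c
      rw [hh, hs_swap_card f g A z w Y s hwz.2.1 hwA g1 g3 c]
      by_cases hc : c ∈ A
      · rw [if_pos hc]
        have := hcA c hc
        omega
      · have : c ≠ a := by rintro rfl; exact hc haA
        rw [if_neg hc, if_neg this, add_zero]
    -- classes of `h`
    have hcls : ∀ c ∈ A, c ≠ f w → ∀ v, h v = c ↔ f v = c := by
      intro c hc hcw v
      simp only [hh, hsSwap]
      by_cases hvw : v = w
      · subst hvw
        simp only [if_true]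
        constructor
        · rintro rfl; exact absurd hc hYA
        · intro h; exact absurd h.symm hcw
      · by_cases hvz : v = z
        · subst hvz
          simp only [if_neg hvw, if_true]
          constructor
          · intro h; exact absurd h.symm hcw
          · rintro rfl; exact absurd hc hwz.2.1
        · simp only [if_neg hvw, if_neg hvz]
          by_cases hvA : f v ∈ A
          · rw [if_pos hvA]
          · rw [if_neg hvA]
            constructor
            · rintro rfl; exact absurd hc (g1 v hvA hvz)
            · rintro rfl; exact absurd hc hvA
    have hmovh : ∀ x ∈ A, ∀ y ∈ A, x ≠ f w → y ≠ f w → hsMov G f x y → hsMov G h x y := by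
      rintro x hx y hy hxw hyw ⟨v, hv, hv'⟩
      exact ⟨v, (hcls x hx hxw v).2 hv, fun u hu h => hv' u hu ((hcls y hy hyw u).1 h)⟩
    have acc1 : ∀ c ∈ A, c ≠ f w → Relation.ReflTransGen (hsMov G h) c a := by
      intro c hc hcw
      have key := Relation.ReflTransGen.head_induction_on
        (motive := fun x _ => x ≠ f w → Relation.ReflTransGen (hsMov G h) x a)
        (hterm (f w) hwz.1 c hc hcw) (fun _ => Relation.ReflTransGen.refl) (by
          intro x y hxy hy ihy hxw
          have hy' := Relation.ReflTransGen.mono (p := hsMov G f) (fun _ _ h => h.1) _ _ hy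
          exact Relation.ReflTransGen.head (hmovh x ((hA x).2 (Relation.ReflTransGen.head hxy.1 hy'))
            y ((hA y).2 hy') hxw hxy.2 hxy.1) (ihy hxy.2))
      exact key hcw
    have acc2 : Relation.ReflTransGen (hsMov G h) (f w) a := by
      obtain ⟨c', c1, ⟨v, hv, hv'⟩, c3⟩ := hs_first_step ((hA _).1 hwA) hwne
      have hc'A : c' ∈ A := (hA c').2 (Relation.ReflTransGen.mono (fun _ _ h => h.1) _ _ c3)
      refine Relation.ReflTransGen.head ⟨v, ?_, ?_⟩ (acc1 c' hc'A c1)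
      · have hvw : v ≠ w := by
          rintro rfl
          obtain ⟨x, hx, hxc⟩ := hmv c' hwz hc'A c1
          exact hv' x hx hxc
        have hvz : v ≠ z := by
          rintro rfl
          exact hwz.2.1 (hv ▸ hwA)
        simp [hh, hsSwap, hvw, hvz, hv, hwA]
      · intro x hx hxc
        exact hv' x hx ((hcls c' hc'A c1 x).1 hxc)
    have hz'w : z' ≠ w := by rintro rfl; exact hwz'.2.1 hwA
    have hhz' : h z' = g z' := by
      simp [hh, hsSwap, hz'w, hzz'.symm, hwz'.2.1]
    have acc3 : Relation.ReflTransGen (hsMov G h) (h z') a := by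
      refine Relation.ReflTransGen.head ⟨z', rfl, ?_⟩ acc2
      intro x hx hxw
      by_cases hxz : x = z
      · subst hxz; exact hnadj hx.symm
      by_cases hxw' : x = w
      · subst hxw'
        simp [hh, hsSwap] at hxw
        exact hYw hxw
      simp only [hh, hsSwap, if_neg hxz, if_neg hxw'] at hxw
      by_cases hxA : f x ∈ A
      · rw [if_pos hxA] at hxw
        exact hxw' (hwz'.2.2.2 x hx hxw)
      · rw [if_neg hxA] at hxw
        exact g1 x hxA hxz (hxw ▸ hwA)
    refine ih _ ?_ h a Y rfl hhp hhc
    rw [← hn]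
    apply Finset.card_lt_card
    rw [Finset.ssubset_iff_of_subset]
    · refine ⟨h z', ?_, ?_⟩
      · simp only [Finset.mem_filter, Finset.mem_univ, true_and]
        rw [← hA, hhz']
        exact g1 z' hwz'.2.1 hzz'.symm
      · simp only [Finset.mem_filter, Finset.mem_univ, true_and, not_not]
        exact acc3
    · intro c hc
      simp only [Finset.mem_filter, Finset.mem_univ, true_and] at hc ⊢
      intro hcA'
      apply hc
      by_cases hcw : c = f w
      · rw [hcw]; exact acc2
      · exact acc1 c ((hA c).2 hcA') hcw
  push Not at case2
  exfalso
  refine hs_count G f A T U hTA hTn hUA hUT (Fintype.card C) q s hAcomp hq1 hdeg hBcard ?_ h1 ?_ ?_ case2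
  · intro c hc
    have hca : c ≠ a := by rintro rfl; exact haT hc
    have := hcA c (hTA hc)
    rwa [if_neg hca, add_zero] at this
  · intro y hy c hc hcT hcU
    by_contra hcon
    push Not at hcon
    exact hblk (f y) hy c hc hcT hcU ⟨y, rfl, hcon⟩
  · intro w z hwz c hc hcw
    exact case1 w z c hwz hc hcw

/-- the graph `G` with only the edges inside `T` -/
def hsRes {V : Type*} (G : SimpleGraph V) (T : Finset V) : SimpleGraph V where
  Adj u v := G.Adj u v ∧ u ∈ T ∧ v ∈ T
  symm := ⟨fun _ _ h => ⟨h.1.symm, h.2.2, h.2.1⟩⟩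
  loopless := ⟨fun _ h => h.1.ne rfl⟩

universe hsu

open Classical in
/-- Hajnal–Szemerédi, divisible case -/
theorem hs_div : ∀ (N : ℕ) (V : Type hsu) [Fintype V] (C : Type) [Fintype C] (G : SimpleGraph V)
    (s : ℕ), Fintype.card V = N → Fintype.card V = Fintype.card C * s →
    (∀ v, (Finset.univ.filter (fun x => G.Adj v x)).card < Fintype.card C) →
    ∃ f : V → C, hsProper G f ∧ ∀ c, (hsF f c).card = s := by
  intro N
  induction N using Nat.strong_induction_on with
  | _ N ih =>
  intro V _ C _ G s hN hcard hdeg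
  have inner : ∀ T : Finset V, ∃ f : V → C, hsProper (hsRes G T) f ∧ ∀ c, (hsF f c).card = s := by
    intro T
    induction T using Finset.induction_on with
    | empty =>
      have e : V ≃ C × Fin s := Fintype.equivOfCardEq (by simp [hcard])
      have hinj : ∀ c, Function.Injective (fun i => e.symm (c, i)) := by
        intro c i j h
        simpa using h
      refine ⟨fun v => (e v).1, fun u v h => by simp [hsRes] at h, fun c => ?_⟩
      have : hsF (fun v => (e v).1) c
          = (Finset.univ : Finset (Fin s)).map ⟨fun i => e.symm (c, i), hinj c⟩ := by
        ext v
        simp only [hsF, Finset.mem_filter, Finset.mem_univ, true_and, Finset.mem_map,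
          Function.Embedding.coeFn_mk]
        constructor
        · intro h
          exact ⟨(e v).2, by rw [← h]; simp⟩
        · rintro ⟨i, rfl⟩
          simp
      rw [this]; simp
    | insert u T hu ihT =>
      obtain ⟨f, hf, hfc⟩ := ihT
      have hle : ∀ v, (Finset.univ.filter (fun x => (hsRes G (insert u T)).Adj v x)).card
          ≤ (Finset.univ.filter (fun x => G.Adj v x)).card := by
        intro v
        apply Finset.card_le_card
        intro x hx
        simp only [Finset.mem_filter, Finset.mem_univ, true_and] at hx ⊢
        exact hx.1
      obtain ⟨b, hb⟩ : ∃ b, ∀ x, G.Adj u x → f x ≠ b := by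
        by_contra hcon
        push Not at hcon
        have : (Finset.univ : Finset C) ⊆ (Finset.univ.filter (fun x => G.Adj u x)).image f := by
          intro c _
          obtain ⟨x, hx, hxc⟩ := hcon c
          exact Finset.mem_image.2 ⟨x, by simpa using hx, hxc⟩
        have := (Finset.card_le_card this).trans Finset.card_image_le
        have := hdeg u
        rw [Finset.card_univ] at *
        omega
      refine hs_main (hsRes G (insert u T)) s (fun v => lt_of_le_of_lt (hle v) (hdeg v)) ?_ _
        (Function.update f u b) (f u) b rfl ?_ ?_
      · intro S Q hS hSQ hSdeg
        obtain ⟨g, g1, g2⟩ := ih S.card (hN ▸ hS) S Q ((hsRes G (insert u T)).comap Subtype.val) s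
          (by simp) (by simpa using hSQ) (by
            intro v
            rw [Fintype.card_coe]
            refine lt_of_le_of_lt ?_ (hSdeg v v.2)
            rw [← Finset.card_map (Function.Embedding.subtype (· ∈ S))]
            apply Finset.card_le_card
            intro x hx
            simp at hx ⊢
            exact ⟨hx.2, hx.1⟩)
        have hQ : ∀ v : V, v ∈ S → Nonempty Q := fun v hv => ⟨g ⟨v, hv⟩⟩
        have hC : Nonempty C := ⟨b⟩
        refine ⟨fun v => if hv : v ∈ S then (g ⟨v, hv⟩ : C) else b, ?_, ?_, ?_⟩
        · intro v hv; simp [hv]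
        · intro x hx y hy hxy
          simp only [hx, hy, dif_pos]
          intro h
          exact g1 ⟨x, hx⟩ ⟨y, hy⟩ hxy (Subtype.ext h)
        · intro c hc
          rw [← g2 ⟨c, hc⟩, ← Finset.card_map (Function.Embedding.subtype (· ∈ S))]
          congr 1
          ext v
          simp only [hsF, Finset.mem_filter, Finset.mem_univ, true_and, Finset.mem_map,
            Function.Embedding.subtype_apply]
          constructor
          · rintro ⟨hv, h⟩
            rw [dif_pos hv] at h
            exact ⟨⟨v, hv⟩, Subtype.ext h, rfl⟩
          · rintro ⟨⟨v', hv⟩, h, rfl⟩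
            refine ⟨hv, ?_⟩
            rw [dif_pos hv]
            exact congrArg Subtype.val h
      · have half : ∀ y, (hsRes G (insert u T)).Adj u y →
            Function.update f u b u ≠ Function.update f u b y := by
          intro y hy
          rw [Function.update_self, Function.update_of_ne hy.ne']
          exact (hb y hy.1).symm
        intro x y hxy
        by_cases hx : x = u
        · subst hx; exact half y hxy
        by_cases hy : y = u
        · subst hy; exact (half x hxy.symm).symm
        rw [Function.update_of_ne hx, Function.update_of_ne hy]
        exact hf x y ⟨hxy.1, Finset.mem_of_mem_insert_of_ne hxy.2.1 hx,
          Finset.mem_of_mem_insert_of_ne hxy.2.2 hy⟩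
      · intro c
        rw [hs_card_update, hfc]
  obtain ⟨f, hf, hfc⟩ := inner Finset.univ
  exact ⟨f, fun u v huv => hf u v ⟨huv, Finset.mem_univ _, Finset.mem_univ _⟩, hfc⟩

open Classical in
/-- Hajnal–Szemerédi -/
theorem hs_full (V : Type hsu) [Fintype V] (k : ℕ) (G : SimpleGraph V) (hk : 1 ≤ k)
    (hdeg : ∀ v, (Finset.univ.filter (fun x => G.Adj v x)).card < k) :
    ∃ f : V → Fin k, hsProper G f ∧ ∀ c c', (hsF f c).card ≤ (hsF f c').card + 1 := by
  obtain ⟨s, p, hp, hsp⟩ : ∃ s p : ℕ, p ≤ k ∧ Fintype.card V + p = k * s := by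
    refine ⟨Fintype.card V / k + 1, k - Fintype.card V % k, by omega, ?_⟩
    have := Nat.div_add_mod (Fintype.card V) k
    have := Nat.mod_lt (Fintype.card V) hk
    rw [mul_add]
    omega
  let G' : SimpleGraph (V ⊕ Fin p) := G ⊕g (⊤ : SimpleGraph (Fin p))
  obtain ⟨f, hf, hfc⟩ := hs_div _ (V ⊕ Fin p) (Fin k) G' s rfl (by simp [hsp]) (by
    rintro (v | i)
    · rw [Fintype.card_fin]
      refine lt_of_le_of_lt ?_ (hdeg v)
      rw [← Finset.card_map (s := Finset.univ.filter (fun x => G.Adj v x))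
        (Function.Embedding.inl (β := Fin p))]
      apply Finset.card_le_card
      rintro (x | x) hx <;> simp [G'] at hx ⊢
      exact hx
    · rw [Fintype.card_fin]
      have : (Finset.univ.filter (fun x => G'.Adj (Sum.inr i) x)).card
          ≤ ((Finset.univ.erase i).map (Function.Embedding.inr (α := V))).card := by
        apply Finset.card_le_card
        rintro (x | x) hx <;> simp [G'] at hx ⊢
        exact fun h => hx h.symm
      rw [Finset.card_map, Finset.card_erase_of_mem (Finset.mem_univ _)] at this
      simp at this
      have := i.2
      omega)
  have split : ∀ c, (hsF (fun v => f (Sum.inl v)) c).card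
      + (hsF (fun i => f (Sum.inr i)) c).card = s := by
    intro c
    rw [← hfc c]
    simp only [hsF, Finset.card_filter, Fintype.sum_sum_type]
    congr 1 <;> exact Finset.sum_congr rfl (fun _ _ => by congr)
  have small : ∀ c, (hsF (fun i => f (Sum.inr i)) c).card ≤ 1 := by
    intro c
    rw [Finset.card_le_one]
    intro i hi j hj
    by_contra hne
    simp only [hsF, Finset.mem_filter, Finset.mem_univ, true_and] at hi hj
    exact hf (Sum.inr i) (Sum.inr j) (by simpa [G'] using hne) (hi.trans hj.symm)
  refine ⟨fun v => f (Sum.inl v), fun u v huv => hf _ _ (by simpa [G'] using huv), fun c c' => ?_⟩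
  have := split c
  have := split c'
  have := small c
  have := small c'
  omega

theorem stmt14 {V : Type*} [Fintype V] [DecidableEq V] (n d ℓ : ℕ)
    (hd : 1 ≤ d) (hl : 1 ≤ ℓ) (hn : Fintype.card V = n)
    (G : SimpleGraph V) [DecidableRel G.Adj] (hdeg : ∀ v, G.degree v ≤ d)
    (g : Fin d → V → Fin n)
    (hfib : ∀ (i : Fin d) (w : Fin n), Set.ncard {v : V | g i v = w} ≤ 4) :
    (∀ u : V, Set.ncard {u' : V | u' ≠ u ∧
        ∃ i, |((g i u : ℕ) : ℤ) - ((g i u' : ℕ) : ℤ)| < (ℓ : ℤ)} < 8 * d * ℓ) ∧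
    ∃ part : V → Fin (8 * d * ℓ),
      (∀ (c : Fin (8 * d * ℓ)) (u u' : V), part u = c → part u' = c → u ≠ u' →
        ∀ i, (ℓ : ℤ) ≤ |((g i u : ℕ) : ℤ) - ((g i u' : ℕ) : ℤ)|) ∧
      (∀ c c' : Fin (8 * d * ℓ),
        (Set.ncard {v : V | part v = c} : ℤ) - (Set.ncard {v : V | part v = c'} : ℤ) ≤ 1) := by
  classical
  have part1 : ∀ u : V, Set.ncard {u' : V | u' ≠ u ∧
        ∃ i, |((g i u : ℕ) : ℤ) - ((g i u' : ℕ) : ℤ)| < (ℓ : ℤ)} < 8 * d * ℓ := by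
    intro u
    let I : Fin d → Finset (Fin n) := fun i =>
      Finset.univ.filter (fun w => |((g i u : ℕ) : ℤ) - ((w : ℕ) : ℤ)| < (ℓ : ℤ))
    have hI : ∀ i, (I i).card ≤ 2 * ℓ - 1 := by
      intro i
      have : (I i).card ≤ (Finset.Ioo (((g i u : ℕ) : ℤ) - ℓ) (((g i u : ℕ) : ℤ) + ℓ)).card := by
        apply Finset.card_le_card_of_injOn (fun w : Fin n => ((w : ℕ) : ℤ))
        · intro w hw
          simp only [I, Finset.coe_filter, Finset.mem_univ, true_and, Set.mem_ofPred_eq, abs_lt] at hw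
          simp only [Finset.coe_Ioo, Set.mem_Ioo]
          omega
        · intro x _ y _ h
          exact Fin.ext (by simpa using h)
      rw [Int.card_Ioo] at this
      omega
    let Z : Finset V := Finset.univ.biUnion (fun i => (I i).biUnion
      (fun w => Finset.univ.filter (fun v => g i v = w)))
    have hZ : Z.card ≤ d * ((2 * ℓ - 1) * 4) := by
      have e := Finset.card_biUnion_le_card_mul (Finset.univ : Finset (Fin d))
        (fun i => (I i).biUnion (fun w => Finset.univ.filter (fun v => g i v = w)))
        ((2 * ℓ - 1) * 4) (by
          intro i _
          refine (Finset.card_biUnion_le_card_mul _ _ 4 ?_).trans (Nat.mul_le_mul_right _ (hI i))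
          intro w _
          have := hfib i w
          rwa [Set.ncard_eq_toFinset_card', Set.toFinset_ofPred] at this)
      simpa [Z] using e
    have hsub : {u' : V | u' ≠ u ∧
        ∃ i, |((g i u : ℕ) : ℤ) - ((g i u' : ℕ) : ℤ)| < (ℓ : ℤ)} ⊆ (Z : Set V) := by
      rintro v ⟨_, i, hi⟩
      simp only [Z, I, Finset.coe_biUnion, Set.mem_iUnion]
      exact ⟨i, by simp, g i v, by simpa using hi, by simp⟩
    have e1 := Set.ncard_le_ncard hsub (Finset.finite_toSet Z)
    rw [Set.ncard_coe_finset] at e1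
    refine lt_of_le_of_lt (e1.trans hZ) ?_
    have : d * ((2 * ℓ - 1) * 4) < d * (8 * ℓ) := by
      apply Nat.mul_lt_mul_of_pos_left <;> omega
    calc _ < _ := this
      _ = _ := by ring
  refine ⟨part1, ?_⟩
  let H : SimpleGraph V :=
    { Adj := fun u v => v ≠ u ∧ ∃ i, |((g i u : ℕ) : ℤ) - ((g i v : ℕ) : ℤ)| < (ℓ : ℤ)
      symm := ⟨by
        rintro u v ⟨h1, i, h2⟩
        exact ⟨h1.symm, i, by rwa [abs_sub_comm]⟩⟩
      loopless := ⟨fun u h => h.1 rfl⟩ }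
  obtain ⟨f, hf, hfc⟩ := hs_full V (8 * d * ℓ) H (by
    have := Nat.mul_le_mul hd hl
    nlinarith) (by
    intro v
    have := part1 v
    rw [Set.ncard_eq_toFinset_card', Set.toFinset_ofPred] at this
    convert this)
  refine ⟨f, ?_, ?_⟩
  · intro c u u' hu hu' hne i
    by_contra hcon
    push Not at hcon
    exact hf u u' ⟨hne.symm, i, hcon⟩ (hu.trans hu'.symm)
  · intro c c'
    have e : ∀ c, Set.ncard {v : V | f v = c} = (hsF f c).card := by
      intro c
      rw [Set.ncard_eq_toFinset_card', Set.toFinset_ofPred]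
      simp only [hsF]
      congr
    rw [e, e]
    have := hfc c c'
    omega
end
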